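/- Let 𝒮₀ be a nonempty decreasing subset of 𝒮, let z∈V_S with z⁻=v₁, and let h:𝒫(V_S)→ℝ be bounded and continuous. Then lim_{n→∞} W^n_{𝒮₀}(z) = inf_{μ∈𝒞(𝒮₀)} ( Λ^z_{δ,𝒮₀}(μ) + h(μ) ), as an equality in (−∞,+∞] (with inf over the empty set equal to +∞). -/

import Mathlib

open scoped BigOperators Classical ENNReal
open Filter Topology

noncomputable section
namespace ORRW

/-- Probability measures on a finite type `A`, topologized as a subset of `ℝ^A`. -/
abbrev ProbMeas (A : Type) [Fintype A] : Type :=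
  {p : A → ℝ // (∀ a, 0 ≤ p a) ∧ ∑ a, p a = 1}

/-- Relative entropy `R(γ‖ρ)` between two finitely supported "rows", valued in `EReal`,
with `+∞` when absolute continuity fails. -/
def relEnt {A : Type} [Fintype A] (γ ρ : A → ℝ) : EReal :=
  if ∀ a, ρ a = 0 → γ a = 0 then ((∑ a, γ a * Real.log (γ a / ρ a) : ℝ) : EReal)
  else (⊤ : EReal)

/-- `∫ R(q‖p) dν = Σ_a ν(a) · R(q(a,·)‖p(a,·))`. -/
def relEntInt {A : Type} [Fintype A] (ν : A → ℝ) (q p : A → A → ℝ) : EReal :=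
  ∑ a, (ν a : EReal) * relEnt (q a) (p a)

/-- `ν` is an invariant measure of the kernel `q`. -/
def Invariant {A : Type} [Fintype A] (ν : A → ℝ) (q : A → A → ℝ) : Prop :=
  ∀ y, ∑ x, ν x * q x y = ν y

/-- Extended-real logarithm: `⊥` at nonpositive arguments. -/
def elog (x : ℝ) : EReal := if x ≤ 0 then (⊥ : EReal) else ((Real.log x : ℝ) : EReal)

/-- Empirical measure of a finite trajectory `f : Fin (n+1) → A`. -/
def empMeas {A : Type} [Fintype A] [DecidableEq A] (n : ℕ) (f : Fin (n + 1) → A) :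
    ProbMeas A :=
  ⟨fun a => ((Finset.univ.filter (fun i => f i = a)).card : ℝ) / (n + 1),
    fun a => by positivity, by
      have key : ∑ a : A, ((Finset.univ.filter (fun i => f i = a)).card) = n + 1 := by
        have h := Finset.card_eq_sum_card_fiberwise
          (s := (Finset.univ : Finset (Fin (n + 1)))) (t := (Finset.univ : Finset A))
          (f := f) (fun i _ => Finset.mem_univ (f i))
        simpa using h.symm
      have key' : ∑ a : A, (((Finset.univ.filter (fun i => f i = a)).card : ℝ)) = (n : ℝ) + 1 := by
        have h2 := congrArg (fun m : ℕ => (m : ℝ)) key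
        push_cast at h2
        simpa using h2
      rw [← Finset.sum_div, key', div_self (by positivity)]⟩

section Graph

variable {V : Type} [Fintype V] [DecidableEq V]

/-- Weight of an edge given the set `F` of already traversed edges. -/
def gw (δ : ℝ) (F : Finset (Sym2 V)) (e : Sym2 V) : ℝ := if e ∈ F then δ else 1

/-- The transition kernel `p̂_F` on `V`. -/
def phat (G : SimpleGraph V) [DecidableRel G.Adj] (δ : ℝ) (F : Finset (Sym2 V))
    (x y : V) : ℝ :=
  if G.Adj x y then gw δ F s(x, y) / ∑ z ∈ G.neighborFinset x, gw δ F s(x, z) else 0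

/-- Two edges are adjacent iff they share a vertex. -/
def edgeAdj (e e' : Sym2 V) : Prop := ∃ v, v ∈ e ∧ v ∈ e'

/-- `x` is a vertex of the edge set `F`. -/
def memVerts (F : Finset (Sym2 V)) (x : V) : Prop := ∃ e ∈ F, x ∈ e

/-- `𝒯_G`: stochastic matrices on `V` adapted to `G`. -/
def TG (G : SimpleGraph V) : Set (V → V → ℝ) :=
  {q | (∀ x y, 0 ≤ q x y) ∧ (∀ x, ∑ y, q x y = 1) ∧ ∀ x y, q x y ≠ 0 → G.Adj x y}

/-- `𝒯(F)`: stochastic kernels from the vertex set of `F` to `V`, supported on `F`. -/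
def TE (F : Finset (Sym2 V)) : Set (V → V → ℝ) :=
  {q | (∀ x y, 0 ≤ q x y) ∧ (∀ x, memVerts F x → ∑ y, q x y = 1) ∧
    ∀ x y, q x y ≠ 0 → s(x, y) ∈ F}

/-- `ℰ`: admissible increasing sequences of traversed edge sets. -/
def seqE (G : SimpleGraph V) [DecidableRel G.Adj] (v₁ : V) :
    Set (Fin G.edgeFinset.card → Finset (Sym2 V)) :=
  {Es | (∀ k, Es k ⊆ G.edgeFinset) ∧ (∀ k, (Es k).card = (k : ℕ) + 1) ∧
    (∀ k l : Fin G.edgeFinset.card, (k : ℕ) + 1 = (l : ℕ) → Es k ⊂ Es l) ∧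
    (∀ k : Fin G.edgeFinset.card, (k : ℕ) = 0 → ∃ e ∈ Es k, v₁ ∈ e) ∧
    (∀ k l : Fin G.edgeFinset.card, (k : ℕ) + 1 = (l : ℕ) →
      ∀ e ∈ Es l \ Es k, ∃ e' ∈ Es k, edgeAdj e e')}

/-- The rate function `I_δ`. -/
def Ifun (G : SimpleGraph V) [DecidableRel G.Adj] (v₁ : V) (δ : ℝ) (ν : ProbMeas V) : EReal :=
  sInf { c : EReal |
    ∃ (νs : Fin G.edgeFinset.card → ProbMeas V) (r : Fin G.edgeFinset.card → ℝ)
      (Es : Fin G.edgeFinset.card → Finset (Sym2 V))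
      (qs : Fin G.edgeFinset.card → V → V → ℝ),
      Es ∈ seqE G v₁ ∧ (∀ k, 0 ≤ r k) ∧ (∑ k, r k = 1) ∧
      (∀ k x, (νs k).1 x ≠ 0 → memVerts (Es k) x) ∧
      (∀ x, ∑ k, r k * (νs k).1 x = ν.1 x) ∧
      (∀ k, qs k ∈ TE (Es k)) ∧ (∀ k, Invariant (νs k).1 (qs k)) ∧
      c = ∑ k, ((r k : ℝ) : EReal) * relEntInt (νs k).1 (qs k) (phat G δ (Es k)) }

/-- Edges traversed along a path, given as a list of consecutively visited vertices. -/
def pathEdges : List V → Finset (Sym2 V)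
  | [] => ∅
  | [_] => ∅
  | x :: y :: t => insert s(x, y) (pathEdges (y :: t))

/-- Product of one-step ORRW transition probabilities along a trajectory,
the trajectory being listed in reverse chronological order. -/
def stepsProb (G : SimpleGraph V) [DecidableRel G.Adj] (δ : ℝ) : List V → ℝ
  | [] => 1
  | [_] => 1
  | y :: x :: t => phat G δ (pathEdges (x :: t).reverse) x y * stepsProb G δ (x :: t)

/-- The law of `(X_0, …, X_n)` for the `δ`-ORRW started at `v₁`. -/
def trajProb (G : SimpleGraph V) [DecidableRel G.Adj] (δ : ℝ) (v₁ : V) (n : ℕ)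
    (f : Fin (n + 1) → V) : ℝ :=
  if f 0 = v₁ then stepsProb G δ (List.ofFn f).reverse else 0

/-- `P_{v₁}(L_{n+1} ∈ C)`: the probability that the empirical measure of the first
`n+1` positions of the `δ`-ORRW lies in `C`. -/
def probEmp (G : SimpleGraph V) [DecidableRel G.Adj] (δ : ℝ) (v₁ : V) (n : ℕ)
    (C : Set (ProbMeas V)) : ℝ :=
  ∑ f : Fin (n + 1) → V, if empMeas n f ∈ C then trajProb G δ v₁ n f else 0

/-- The family `𝒮` of edge sets of connected subgraphs having an edge at `v₁`. -/
def scrS (G : SimpleGraph V) [DecidableRel G.Adj] (v₁ : V) : Set (Finset (Sym2 V)) :=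
  {F | F ⊆ G.edgeFinset ∧ (∃ e ∈ F, v₁ ∈ e) ∧
    ∀ x y : V, memVerts F x → memVerts F y →
      (SimpleGraph.fromEdgeSet (↑F : Set (Sym2 V))).Reachable x y}

/-- `𝒮₀` is a decreasing subset of `𝒮`. -/
def DecreasingIn (G : SimpleGraph V) [DecidableRel G.Adj] (v₁ : V)
    (S0 : Set (Finset (Sym2 V))) : Prop :=
  ∀ F₁ F₂, F₁ ∈ scrS G v₁ → F₂ ∈ scrS G v₁ → F₁ ⊆ F₂ → F₂ ∈ S0 → F₁ ∈ S0

/-- `P_{v₁}(T_{𝒮₀} > n)`. -/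
def probTgt (G : SimpleGraph V) [DecidableRel G.Adj] (δ : ℝ) (v₁ : V)
    (S0 : Set (Finset (Sym2 V))) (n : ℕ) : ℝ :=
  ∑ f : Fin (n + 1) → V,
    if ∀ k, 1 ≤ k → k ≤ n → pathEdges ((List.ofFn f).take (k + 1)) ∈ S0 then
      trajProb G δ v₁ n f
    else 0

/-- `P_{v₁}(C_E > n)` for the edge cover time `C_E`. -/
def probCgt (G : SimpleGraph V) [DecidableRel G.Adj] (δ : ℝ) (v₁ : V) (n : ℕ) : ℝ :=
  ∑ f : Fin (n + 1) → V,
    if ¬ G.edgeFinset ⊆ pathEdges (List.ofFn f) then trajProb G δ v₁ n f else 0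

/-- `E_{v₁}[exp (α T_{𝒮₀})]`, valued in `ℝ≥0∞`; the stopping time takes values in
`{1, 2, …} ∪ {∞}`. -/
def expT (G : SimpleGraph V) [DecidableRel G.Adj] (δ : ℝ) (v₁ : V)
    (S0 : Set (Finset (Sym2 V))) (α : ℝ) : ℝ≥0∞ :=
  (∑' n : ℕ, ENNReal.ofReal
      (Real.exp (α * (n + 1)) * (probTgt G δ v₁ S0 n - probTgt G δ v₁ S0 (n + 1)))) +
    (if 0 < α then (⊤ : ℝ≥0∞) else if α = 0 then 1 else 0) *
      ENNReal.ofReal (⨅ n : ℕ, probTgt G δ v₁ S0 n)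

/-- `E_{v₁}[exp (α C_E)]`, valued in `ℝ≥0∞`. -/
def expC (G : SimpleGraph V) [DecidableRel G.Adj] (δ : ℝ) (v₁ : V) (α : ℝ) : ℝ≥0∞ :=
  (∑' n : ℕ, ENNReal.ofReal
      (Real.exp (α * (n + 1)) * (probCgt G δ v₁ n - probCgt G δ v₁ (n + 1)))) +
    (if 0 < α then (⊤ : ℝ≥0∞) else if α = 0 then 1 else 0) *
      ENNReal.ofReal (⨅ n : ℕ, probCgt G δ v₁ n)

/-- The critical exponent `α_c(δ)` attached to a family `𝒮₀` of edge sets. -/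
def alphaC (G : SimpleGraph V) [DecidableRel G.Adj] (δ : ℝ)
    (S0 : Set (Finset (Sym2 V))) : EReal :=
  sInf { c : EReal | ∃ (ν : ProbMeas V) (F : Finset (Sym2 V)) (q : V → V → ℝ),
    F ∈ S0 ∧ q ∈ TE F ∧ (∀ x, ν.1 x ≠ 0 → memVerts F x) ∧ Invariant ν.1 q ∧
    c = relEntInt ν.1 q (phat G δ F) }

/-- `α_c^1(δ)`: the critical exponent for the cover time. -/
def alphaC1 (G : SimpleGraph V) [DecidableRel G.Adj] (v₁ : V) (δ : ℝ) : EReal :=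
  alphaC G δ (scrS G v₁ \ {G.edgeFinset})

end Graph

section Lifted

variable {V : Type} [Fintype V] [LinearOrder V]

/-- Smaller endpoint of an unordered pair. -/
def sym2lo (e : Sym2 V) : V := Sym2.lift ⟨fun a b => min a b, fun a b => min_comm a b⟩ e

/-- Larger endpoint of an unordered pair. -/
def sym2hi (e : Sym2 V) : V := Sym2.lift ⟨fun a b => max a b, fun a b => max_comm a b⟩ e

/-- `V_S = E × {-1, 1}`: vertex set of the lifted directed graph `S`
(`true` plays the role of `+1`). -/
abbrev VSet (G : SimpleGraph V) [DecidableRel G.Adj] : Type :=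
  {e : Sym2 V // e ∈ G.edgeFinset} × Bool

/-- Tail `z⁻` of an oriented edge. -/
def zm (G : SimpleGraph V) [DecidableRel G.Adj] (z : VSet G) : V :=
  if z.2 then sym2lo z.1.1 else sym2hi z.1.1

/-- Head `z⁺` of an oriented edge. -/
def zp (G : SimpleGraph V) [DecidableRel G.Adj] (z : VSet G) : V :=
  if z.2 then sym2hi z.1.1 else sym2lo z.1.1

/-- The kernel `p_F` on the lifted directed graph `S`. -/
def pS (G : SimpleGraph V) [DecidableRel G.Adj] (δ : ℝ) (F : Finset (Sym2 V))
    (z₁ z₂ : VSet G) : ℝ :=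
  if zp G z₁ = zm G z₂ then
    gw δ F z₂.1.1 / ∑ w : VSet G, (if zp G z₁ = zm G w then gw δ F w.1.1 else 0)
  else 0

/-- `𝒯_S`: stochastic matrices on `V_S` moving along orientations. -/
def TS (G : SimpleGraph V) [DecidableRel G.Adj] : Set (VSet G → VSet G → ℝ) :=
  {q | (∀ z w, 0 ≤ q z w) ∧ (∀ z, ∑ w, q z w = 1) ∧ ∀ z w, q z w ≠ 0 → zp G z = zm G w}

/-- `𝒞(𝒮₀)`: probability measures on `V_S` whose first marginal is supported in
some member of `𝒮₀`. -/
def CC (G : SimpleGraph V) [DecidableRel G.Adj] (S0 : Set (Finset (Sym2 V))) :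
    Set (ProbMeas (VSet G)) :=
  {μ | ∃ F ∈ S0, ∀ z : VSet G, μ.1 z ≠ 0 → z.1.1 ∈ F}

/-- `Λ_{δ,𝒮₀}`. -/
def Lam (G : SimpleGraph V) [DecidableRel G.Adj] (v₁ : V) (δ : ℝ)
    (S0 : Set (Finset (Sym2 V))) (μ : ProbMeas (VSet G)) : EReal :=
  sInf { c : EReal |
    ∃ (μs : Fin G.edgeFinset.card → ProbMeas (VSet G)) (r : Fin G.edgeFinset.card → ℝ)
      (Es : Fin G.edgeFinset.card → Finset (Sym2 V))
      (qs : Fin G.edgeFinset.card → VSet G → VSet G → ℝ),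
      Es ∈ seqE G v₁ ∧ (∀ k, 0 ≤ r k) ∧ (∀ k, Es k ∉ S0 → r k = 0) ∧ (∑ k, r k = 1) ∧
      (∀ k z, (μs k).1 z ≠ 0 → z.1.1 ∈ Es k) ∧
      (∀ z, ∑ k, r k * (μs k).1 z = μ.1 z) ∧
      (∀ k, qs k ∈ TS G) ∧ (∀ k, Invariant (μs k).1 (qs k)) ∧
      c = ∑ k, ((r k : ℝ) : EReal) * relEntInt (μs k).1 (qs k) (pS G δ (Es k)) }

/-- `Λ^z_{δ,𝒮₀}`. -/
def LamZ (G : SimpleGraph V) [DecidableRel G.Adj] (v₁ : V) (δ : ℝ)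
    (S0 : Set (Finset (Sym2 V))) (z : VSet G) (μ : ProbMeas (VSet G)) : EReal :=
  sInf { c : EReal |
    ∃ (μs : Fin G.edgeFinset.card → ProbMeas (VSet G)) (r : Fin G.edgeFinset.card → ℝ)
      (Es : Fin G.edgeFinset.card → Finset (Sym2 V))
      (qs : Fin G.edgeFinset.card → VSet G → VSet G → ℝ),
      Es ∈ seqE G v₁ ∧ (∀ k : Fin G.edgeFinset.card, (k : ℕ) = 0 → Es k = {z.1.1}) ∧
      (∀ k, 0 ≤ r k) ∧ (∀ k, Es k ∉ S0 → r k = 0) ∧ (∑ k, r k = 1) ∧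
      (∀ k w, (μs k).1 w ≠ 0 → w.1.1 ∈ Es k) ∧
      (∀ w, ∑ k, r k * (μs k).1 w = μ.1 w) ∧
      (∀ k, qs k ∈ TS G) ∧ (∀ k, Invariant (μs k).1 (qs k)) ∧
      c = ∑ k, ((r k : ℝ) : EReal) * relEntInt (μs k).1 (qs k) (pS G δ (Es k)) }

/-- `Λ₁`: the Donsker–Varadhan functional for the simple random walk on `S`
(whose kernel is `pS` with `δ = 1`). -/
def Lam1 (G : SimpleGraph V) [DecidableRel G.Adj] (μ : ProbMeas (VSet G)) : EReal :=
  sInf { c : EReal | ∃ q ∈ TS G, Invariant μ.1 q ∧ c = relEntInt μ.1 q (pS G 1 ∅) }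

/-- Boundary `∂F` of an edge set: edges of `F` adjacent to some edge outside `F`. -/
def bdry (G : SimpleGraph V) [DecidableRel G.Adj] (F : Finset (Sym2 V)) : Finset (Sym2 V) :=
  F.filter fun e => ∃ e' ∈ G.edgeFinset \ F, edgeAdj e e'

/-- Out-degree `d(z)` of `z` in `S`. -/
def outDeg (G : SimpleGraph V) [DecidableRel G.Adj] (z : VSet G) : ℕ :=
  (Finset.univ.filter (fun w : VSet G => zp G z = zm G w)).card

/-- Number `k(z)` of out-neighbours of `z` lying in `F × {-1, 1}`. -/
def outDegIn (G : SimpleGraph V) [DecidableRel G.Adj] (F : Finset (Sym2 V))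
    (z : VSet G) : ℕ :=
  (Finset.univ.filter (fun w : VSet G => zp G z = zm G w ∧ w.1.1 ∈ F)).card

/-- The law of `(Z_0, …, Z_n)` for the lifted `δ`-ORRW conditioned on `Z_0 = z`. -/
def liftTraj (G : SimpleGraph V) [DecidableRel G.Adj] (δ : ℝ) (z : VSet G) (n : ℕ)
    (g : Fin (n + 1) → VSet G) : ℝ :=
  if g 0 = z then
    ∏ i : Fin n,
      pS G δ ((Finset.Iic i.castSucc).image (fun j => (g j).1.1))
        (g i.castSucc) (g i.succ)
  else 0

/-- The restricted logarithmic Laplace functional `W^{n+1}_{𝒮₀}(z)`. -/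
def Wres (G : SimpleGraph V) [DecidableRel G.Adj] (δ : ℝ) (z : VSet G)
    (S0 : Set (Finset (Sym2 V))) (h : ProbMeas (VSet G) → ℝ) (n : ℕ) : EReal :=
  if 0 < ∑ g : Fin (n + 1) → VSet G,
      (if empMeas n g ∈ CC G S0 then liftTraj G δ z n g else 0) then
    ((-((((n : ℝ) + 1))⁻¹ * Real.log (∑ g : Fin (n + 1) → VSet G,
      if empMeas n g ∈ CC G S0 then
        Real.exp (-((n : ℝ) + 1) * h (empMeas n g)) * liftTraj G δ z n g
      else 0)) : ℝ) : EReal)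
  else (⊤ : EReal)

end Lifted

/-!
Record each transition of the walk together with the set `F` of edges visited so far. The
probability of a path depends only on its type, the numbers of transitions of each kind `(F, x, y)`.

There are polynomially many types, and the paths of a given type have total probability at most
`exp (-n J)`, where `J` is the relative entropy of the normalised type with respect to the kernels
`p_F`. A limit of types charges only an increasing exploration sequence `E_k`, and its part at
`F = E_k` is a circulation: it is a competitor in `Λ^z` of cost `lim J`. By compactness this bounds
`W^n` from below.

Conversely, mix the flow of stage `k` of a competitor with a uniform circulation over `E_k` to make
it irreducible, and let the walk follow the resulting chain for about `r_k n` steps. By the law of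
large numbers and a change of measure this costs a factor `exp (-n r_k ∫ R(q_k‖p_{E_k}) dμ_k)` up to
`exp (o(n))`, while passing from `E_k` to `E_{k+1}` takes a bounded time at a bounded cost. Letting
the proportion of the uniform circulation tend to zero bounds `W^n` from above.
-/

/-!
### Transfer operators
-/

section TransferOperator

universe u v

variable {S : Type u} {I : Type v} [Fintype I]

/-- The transfer operator of a Markov chain driven by noise: from the state `s` the noise `i` has
weight `K s i` and moves the chain to `next s i`. Its `n`-th power applied to `φ` is the weighted
sum of `φ` over the endpoints of all `n`-step paths. -/
def transferOp (K : S → I → ℝ) (next : S → I → S) : Module.End ℝ (S → ℝ) where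
  toFun φ s := ∑ i, K s i * φ (next s i)
  map_add' φ ψ := by ext s; simp [mul_add, Finset.sum_add_distrib]
  map_smul' c φ := by ext s; simp [Finset.mul_sum, mul_left_comm]

variable {K : S → I → ℝ} {next : S → I → S}

lemma transferOp_apply (φ : S → ℝ) (s : S) :
    transferOp K next φ s = ∑ i, K s i * φ (next s i) := rfl

lemma transferOp_pow_succ_apply (n : ℕ) (φ : S → ℝ) (s : S) :
    (transferOp K next ^ (n + 1)) φ s =
      ∑ i, K s i * (transferOp K next ^ n) φ (next s i) := by
  rw [pow_succ', Module.End.mul_apply, transferOp_apply]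

lemma transferOp_pow_mono (hK : ∀ s i, 0 ≤ K s i) {φ ψ : S → ℝ} (hφψ : φ ≤ ψ) (n : ℕ) :
    (transferOp K next ^ n) φ ≤ (transferOp K next ^ n) ψ := by
  induction n with
  | zero => exact hφψ
  | succ n ih =>
    intro s
    rw [transferOp_pow_succ_apply, transferOp_pow_succ_apply]
    exact Finset.sum_le_sum fun i _ => mul_le_mul_of_nonneg_left (ih _) (hK s i)

lemma transferOp_pow_nonneg (hK : ∀ s i, 0 ≤ K s i) {φ : S → ℝ} (hφ : 0 ≤ φ) (n : ℕ) (s : S) :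
    0 ≤ (transferOp K next ^ n) φ s := by
  simpa using transferOp_pow_mono (next := next) hK hφ n s

lemma transferOp_pow_one (hK : ∀ s, ∑ i, K s i = 1) (n : ℕ) (s : S) :
    (transferOp K next ^ n) 1 s = 1 := by
  induction n generalizing s with
  | zero => rfl
  | succ n ih => simp [transferOp_pow_succ_apply, ih, hK]

lemma transferOp_pow_one_le_one (hK : ∀ s i, 0 ≤ K s i) (hsum : ∀ s, ∑ i, K s i ≤ 1) (n : ℕ)
    (s : S) : (transferOp K next ^ n) 1 s ≤ 1 := by
  induction n generalizing s with
  | zero => exact le_rfl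
  | succ n ih =>
    rw [transferOp_pow_succ_apply]
    exact (Finset.sum_le_sum fun i _ => mul_le_of_le_one_right (hK s i) (ih _)).trans (hsum s)

lemma mul_transferOp_pow_le (hK : ∀ s i, 0 ≤ K s i) {φ : S → ℝ} (hφ : 0 ≤ φ) (n : ℕ) (s : S)
    (i : I) :
    K s i * (transferOp K next ^ n) φ (next s i) ≤ (transferOp K next ^ (n + 1)) φ s := by
  rw [transferOp_pow_succ_apply]
  exact Finset.single_le_sum
    (f := fun j => K s j * (transferOp K next ^ n) φ (next s j))
    (fun j _ => mul_nonneg (hK s j) (transferOp_pow_nonneg hK hφ n _)) (Finset.mem_univ i)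

end TransferOperator

/-!
### The law of large numbers and a change of measure
-/

section ErgodicChain

universe u v

variable {X : Type u} [Fintype X] {ι : Type v} {q : Matrix X X ℝ} {m : X → ℝ}

/-- An irreducible stochastic matrix `q` together with its strictly positive stationary
distribution `m`. -/
structure IsErgodicChain (q : Matrix X X ℝ) (m : X → ℝ) : Prop where
  nonneg : ∀ x y, 0 ≤ q x y
  row_sum : ∀ x, ∑ y, q x y = 1
  irreducible : ∀ x y, Relation.ReflTransGen (fun a b => 0 < q a b) x y
  pos : ∀ x, 0 < m x
  sum_eq_one : ∑ x, m x = 1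
  stationary : Matrix.vecMul m q = m

open Matrix in
/-- By the maximum principle. -/
lemma IsErgodicChain.eq_of_harmonic (hq : IsErgodicChain q m) {u : X → ℝ} (hu : q *ᵥ u = u)
    (x y : X) : u x = u y := by
  have : Nonempty X := ⟨x⟩
  obtain ⟨x₀, hx₀⟩ := Finite.exists_max u
  suffices eq_max : ∀ y, u y = u x₀ by rw [eq_max x, eq_max y]
  intro y
  induction hq.irreducible x₀ y with
  | refl => rfl
  | @tail b c _ hbc ih =>
    have hmean : ∑ y, q b y * (u x₀ - u y) = 0 := by
      have hub : ∑ y, q b y * u y = u b := congrFun hu b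
      simp only [mul_sub, Finset.sum_sub_distrib, hub, ih, ← Finset.sum_mul, hq.row_sum]
      ring
    have hc := (Finset.sum_eq_zero_iff_of_nonneg fun y _ =>
      mul_nonneg (hq.nonneg b y) (sub_nonneg.2 (hx₀ y))).1 hmean c (Finset.mem_univ c)
    exact (sub_eq_zero.1 ((mul_eq_zero.1 hc).resolve_left hbc.ne')).symm

open Matrix in
lemma IsErgodicChain.finrank_ker_le_one (hq : IsErgodicChain q m) :
    Module.finrank ℝ (LinearMap.ker (1 - q).mulVecLin) ≤ 1 := by
  refine finrank_le_one_iff.2 ?_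
  rcases isEmpty_or_nonempty X with _ | ⟨⟨x₀⟩⟩
  · exact ⟨0, fun w => ⟨0, Subtype.ext (Subsingleton.elim _ _)⟩⟩
  have hone : (1 : X → ℝ) ∈ LinearMap.ker (1 - q).mulVecLin := by
    ext x
    simp [Matrix.mulVec, dotProduct, hq.row_sum]
  refine ⟨⟨1, hone⟩, fun ⟨u, hu⟩ => ⟨u x₀, Subtype.ext (funext fun x => ?_)⟩⟩
  have hharm : q *ᵥ u = u := by
    simpa [Matrix.sub_mulVec, sub_eq_zero, eq_comm] using hu
  simpa using hq.eq_of_harmonic hharm x₀ x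

open Matrix in
lemma IsErgodicChain.exists_poisson_solution (hq : IsErgodicChain q m) {f : X → ℝ}
    (hf : m ⬝ᵥ f = 0) : ∃ u : X → ℝ, u - q *ᵥ u = f := by
  rcases isEmpty_or_nonempty X with _ | _
  · exact ⟨0, Subsingleton.elim _ _⟩
  let L := (1 - q).mulVecLin
  let mean : (X → ℝ) →ₗ[ℝ] ℝ := dotProductBilin ℝ ℝ m
  have range_le : LinearMap.range L ≤ LinearMap.ker mean := by
    rintro _ ⟨u, rfl⟩
    have : m ⬝ᵥ ((1 - q) *ᵥ u) = 0 := by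
      rw [dotProduct_mulVec, vecMul_sub, vecMul_one, hq.stationary, sub_self, zero_dotProduct]
    exact this
  have mean_surjective : Function.Surjective mean := by
    refine LinearMap.surjective fun h0 => ?_
    have : m ⬝ᵥ 1 = 0 := LinearMap.congr_fun h0 1
    rw [dotProduct_one, hq.sum_eq_one] at this
    exact one_ne_zero this
  have dim_L := LinearMap.finrank_range_add_finrank_ker L
  have dim_mean := LinearMap.finrank_range_add_finrank_ker mean
  rw [LinearMap.range_eq_top.2 mean_surjective, finrank_top, Module.finrank_self] at dim_mean
  have dim_ker : Module.finrank ℝ (LinearMap.ker L) ≤ 1 := hq.finrank_ker_le_one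
  have range_eq : LinearMap.range L = LinearMap.ker mean :=
    Submodule.eq_of_le_of_finrank_le range_le (by omega)
  obtain ⟨u, hu⟩ : f ∈ LinearMap.range L := range_eq ▸ LinearMap.mem_ker.2 hf
  exact ⟨u, by simpa [L, Matrix.sub_mulVec] using hu⟩

/-- The transfer operator of the matrix `q` enriched with an additive functional: the second
coordinate of the state increases by `f x y` at every step from `x` to `y`. -/
def additiveOp (q : Matrix X X ℝ) (f : X → X → ι → ℝ) : Module.End ℝ (X × (ι → ℝ) → ℝ) :=
  transferOp (fun s => q s.1) (fun s y => (y, s.2 + f s.1 y))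

/-- The stationary mean of the additive functional `f`. -/
def stationaryMean (m : X → ℝ) (q : Matrix X X ℝ) (f : X → X → ι → ℝ) (j : ι) : ℝ :=
  ∑ x, ∑ y, m x * q x y * f x y j

variable {f : X → X → ι → ℝ}

lemma additiveOp_pow_mono (hq : ∀ x y, 0 ≤ q x y) {φ ψ : X × (ι → ℝ) → ℝ} (hφψ : φ ≤ ψ)
    (n : ℕ) : (additiveOp q f ^ n) φ ≤ (additiveOp q f ^ n) ψ :=
  transferOp_pow_mono (fun (s : X × (ι → ℝ)) y => hq s.1 y) hφψ n

lemma IsErgodicChain.additiveOp_pow_one (hq : IsErgodicChain q m) (n : ℕ)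
    (s : X × (ι → ℝ)) : (additiveOp q f ^ n) 1 s = 1 :=
  transferOp_pow_one (fun t : X × (ι → ℝ) => hq.row_sum t.1) n s

/-- Adding the corrector `u` turns the centred functional into a martingale. -/
lemma IsErgodicChain.additiveOp_pow_corrected_sq_le (hq : IsErgodicChain q m) {μ D : ℝ} {j : ι}
    {u : X → ℝ} (hu : ∀ x, ∑ y, q x y * (f x y j + u y - u x - μ) = 0)
    (hD : ∀ x y, (f x y j + u y - u x - μ) ^ 2 ≤ D) (b : ℝ) (n : ℕ) (x : X) (a : ι → ℝ) :
    (additiveOp q f ^ n) (fun s => (s.2 j + u s.1 - b) ^ 2) (x, a) ≤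
      (a j + u x + n * μ - b) ^ 2 + n * D := by
  induction n generalizing x a with
  | zero => simp
  | succ n ih =>
    set A := a j + u x + (n + 1) * μ - b with hA
    have variance_le : ∑ y, q x y * (f x y j + u y - u x - μ) ^ 2 ≤ D :=
      calc _ ≤ ∑ y, q x y * D := Finset.sum_le_sum fun y _ =>
              mul_le_mul_of_nonneg_left (hD x y) (hq.nonneg x y)
        _ = D := by rw [← Finset.sum_mul, hq.row_sum, one_mul]
    have expand : ∀ y, q x y * (((a + f x y) j + u y + n * μ - b) ^ 2 + n * D) =
        q x y * (A ^ 2 + n * D) + 2 * A * (q x y * (f x y j + u y - u x - μ)) +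
          q x y * (f x y j + u y - u x - μ) ^ 2 := by
      intro y
      simp only [hA, Pi.add_apply]
      ring
    calc (additiveOp q f ^ (n + 1)) (fun s => (s.2 j + u s.1 - b) ^ 2) (x, a)
        ≤ ∑ y, q x y * (((a + f x y) j + u y + n * μ - b) ^ 2 + n * D) := by
          rw [additiveOp, transferOp_pow_succ_apply]
          exact Finset.sum_le_sum fun y _ =>
            mul_le_mul_of_nonneg_left (ih y (a + f x y)) (hq.nonneg x y)
      _ = A ^ 2 + n * D + ∑ y, q x y * (f x y j + u y - u x - μ) ^ 2 := by
          simp only [expand, Finset.sum_add_distrib, ← Finset.mul_sum, ← Finset.sum_mul,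
            hq.row_sum, hu]
          ring
      _ ≤ (a j + u x + (n + 1 : ℕ) * μ - b) ^ 2 + (n + 1 : ℕ) * D := by
          push_cast
          rw [← hA]
          linarith

lemma IsErgodicChain.exists_corrector (hq : IsErgodicChain q m) (f : X → X → ι → ℝ) (j : ι) :
    ∃ u : X → ℝ, ∀ x, ∑ y, q x y * (f x y j + u y - u x - stationaryMean m q f j) = 0 := by
  obtain ⟨u, hu⟩ := hq.exists_poisson_solution
    (f := fun x => ∑ y, q x y * f x y j - stationaryMean m q f j) (by
      simp only [dotProduct, mul_sub, Finset.sum_sub_distrib, ← Finset.sum_mul, hq.sum_eq_one]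
      simp only [stationaryMean, Finset.mul_sum, mul_assoc, one_mul, sub_self])
  refine ⟨u, fun x => ?_⟩
  have hux : u x - ∑ y, q x y * u y = ∑ y, q x y * f x y j - stationaryMean m q f j :=
    congrFun hu x
  simp only [mul_sub, mul_add, Finset.sum_sub_distrib, Finset.sum_add_distrib, ← Finset.sum_mul,
    hq.row_sum]
  linarith

lemma IsErgodicChain.exists_additiveOp_pow_sq_le (hq : IsErgodicChain q m) (f : X → X → ι → ℝ)
    (j : ι) :
    ∃ C : ℝ, ∀ (n : ℕ) (x : X) (a : ι → ℝ),
      (additiveOp q f ^ n) (fun s => (s.2 j - (a j + n * stationaryMean m q f j)) ^ 2) (x, a) ≤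
        C * (n + 1) := by
  obtain ⟨u, hu⟩ := hq.exists_corrector f j
  set μ := stationaryMean m q f j
  obtain ⟨D, hD⟩ := (Set.finite_range fun e : X × X =>
    (f e.1 e.2 j + u e.2 - u e.1 - μ) ^ 2).bddAbove
  replace hD : ∀ x y, (f x y j + u y - u x - μ) ^ 2 ≤ D := fun x y => hD ⟨(x, y), rfl⟩
  obtain ⟨U, hU⟩ := (Set.finite_range fun x => u x ^ 2).bddAbove
  replace hU : ∀ x, u x ^ 2 ≤ U := fun x => hU ⟨x, rfl⟩
  refine ⟨4 * U + 2 * D, fun n x a => ?_⟩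
  set b := a j + n * μ
  have hD0 : 0 ≤ D := (sq_nonneg _).trans (hD x x)
  have hU0 : 0 ≤ U := (sq_nonneg _).trans (hU x)
  have le_corrected : (fun s : X × (ι → ℝ) => (s.2 j - b) ^ 2) ≤
      (2 : ℝ) • (fun s => (s.2 j + u s.1 - b) ^ 2) + (2 * U) • 1 := by
    intro s
    have := hU s.1
    simp only [Pi.add_apply, Pi.smul_apply, smul_eq_mul, Pi.one_apply]
    nlinarith [sq_nonneg (s.2 j - b + 2 * u s.1)]
  have corrected := hq.additiveOp_pow_corrected_sq_le hu hD b n x a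
  rw [show a j + u x + n * μ - b = u x by ring] at corrected
  calc (additiveOp q f ^ n) (fun s => (s.2 j - b) ^ 2) (x, a)
      ≤ (additiveOp q f ^ n) ((2 : ℝ) • (fun s => (s.2 j + u s.1 - b) ^ 2) + (2 * U) • 1) (x, a) :=
        additiveOp_pow_mono hq.nonneg le_corrected n (x, a)
    _ = 2 * (additiveOp q f ^ n) (fun s => (s.2 j + u s.1 - b) ^ 2) (x, a) + 2 * U := by
        simp [hq.additiveOp_pow_one]
    _ ≤ 2 * (U + n * D) + 2 * U := by linarith [hU x]
    _ ≤ (4 * U + 2 * D) * (n + 1) := by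
        have : (0 : ℝ) ≤ n := n.cast_nonneg
        nlinarith [mul_nonneg this hU0]

variable [Fintype ι]

lemma one_sub_sum_sq_div_le_indicator_closedBall {c : ι → ℝ} {r : ℝ} (hr : 0 < r) (v : ι → ℝ) :
    1 - (r ^ 2)⁻¹ * ∑ j, (v j - c j) ^ 2 ≤ (Metric.closedBall c r).indicator 1 v := by
  have hsq : ∀ j, 0 ≤ (v j - c j) ^ 2 := fun j => sq_nonneg _
  by_cases hv : v ∈ Metric.closedBall c r
  · rw [Set.indicator_of_mem hv, Pi.one_apply, sub_le_self_iff]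
    exact mul_nonneg (by positivity) (Finset.sum_nonneg fun j _ => hsq j)
  · rw [Set.indicator_of_notMem hv, sub_nonpos, inv_mul_eq_div, one_le_div (by positivity)]
    rw [Metric.mem_closedBall, dist_pi_le_iff hr.le] at hv
    push Not at hv
    obtain ⟨j, hj⟩ := hv
    calc r ^ 2 ≤ dist (v j) (c j) ^ 2 := pow_le_pow_left₀ hr.le hj.le 2
      _ = (v j - c j) ^ 2 := by rw [Real.dist_eq, sq_abs]
      _ ≤ _ := Finset.single_le_sum (f := fun j => (v j - c j) ^ 2) (fun j _ => hsq j)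
        (Finset.mem_univ j)

lemma IsErgodicChain.eventually_half_le_additiveOp_pow (hq : IsErgodicChain q m)
    (f : X → X → ι → ℝ) {ε : ℝ} (hε : 0 < ε) :
    ∀ᶠ n : ℕ in atTop, ∀ (x : X) (a : ι → ℝ), 1 / 2 ≤ (additiveOp q f ^ n)
      (fun s => (Metric.closedBall (a + (n : ℝ) • stationaryMean m q f) (ε * n)).indicator 1 s.2)
      (x, a) := by
  choose C hC using hq.exists_additiveOp_pow_sq_le f
  filter_upwards [eventually_gt_atTop 0,
    tendsto_natCast_atTop_atTop.eventually_ge_atTop (4 * (∑ j, |C j|) / ε ^ 2)] with n hn0 hn x a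
  have hn1 : (1 : ℝ) ≤ n := by exact_mod_cast hn0
  set c := a + (n : ℝ) • stationaryMean m q f
  set dev : ι → X × (ι → ℝ) → ℝ := fun j s => (s.2 j - c j) ^ 2
  set r := ε * n
  have hr : 0 < r := by positivity
  have sum_le : ∑ j, (additiveOp q f ^ n) (dev j) (x, a) ≤ (∑ j, |C j|) * (n + 1) := by
    rw [Finset.sum_mul]
    refine Finset.sum_le_sum fun j _ => (hC j n x a).trans ?_
    exact mul_le_mul_of_nonneg_right (le_abs_self _) (by positivity)
  have chebyshev : 1 - (r ^ 2)⁻¹ • ∑ j, dev j ≤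
      fun s => (Metric.closedBall c r).indicator 1 s.2 := fun s => by
    simpa only [Pi.sub_apply, Pi.one_apply, Pi.smul_apply, Finset.sum_apply, smul_eq_mul] using
      one_sub_sum_sq_div_le_indicator_closedBall hr s.2
  refine le_trans ?_ (additiveOp_pow_mono hq.nonneg chebyshev n (x, a))
  have small : (r ^ 2)⁻¹ * ∑ j, (additiveOp q f ^ n) (dev j) (x, a) ≤ 1 / 2 := by
    rw [inv_mul_eq_div, div_le_iff₀ (by positivity)]
    rw [div_le_iff₀ (by positivity)] at hn
    refine sum_le.trans ?_
    rw [mul_pow]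
    nlinarith [Finset.sum_nonneg fun j (_ : j ∈ Finset.univ) => abs_nonneg (C j)]
  simp only [map_sub, map_smul, map_sum, Pi.sub_apply, Pi.smul_apply, Finset.sum_apply,
    hq.additiveOp_pow_one, smul_eq_mul]
  linarith

end ErgodicChain

section ChangeOfMeasure

universe u v

variable {X : Type u} [Fintype X] {ι : Type v} {q p : Matrix X X ℝ} {m : X → ℝ}

/-- The additive functional `f` together with, in the extra coordinate `none`, the logarithm of the
likelihood ratio of `q` against `p`. -/
def withLogRatio (q p : Matrix X X ℝ) (f : X → X → ι → ℝ) (x y : X) : Option ι → ℝ :=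
  fun o => o.elim (Real.log (q x y / p x y)) (f x y)

lemma additiveOp_withLogRatio_pow_le (hq : ∀ x y, 0 ≤ q x y) (hp : ∀ x y, 0 ≤ p x y)
    (hqp : ∀ x y, 0 < q x y → 0 < p x y) (f : X → X → ι → ℝ) {φ : X × (ι → ℝ) → ℝ} (hφ : 0 ≤ φ)
    (n : ℕ) (x : X) (c : Option ι → ℝ) :
    (additiveOp q (withLogRatio q p f) ^ n)
        (fun s => Real.exp (-s.2 none) * φ (s.1, fun j => s.2 (some j))) (x, c) ≤
      Real.exp (-c none) * (additiveOp p f ^ n) φ (x, fun j => c (some j)) := by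
  induction n generalizing x c with
  | zero => exact le_rfl
  | succ n ih =>
    rw [additiveOp, additiveOp, transferOp_pow_succ_apply, transferOp_pow_succ_apply,
      Finset.mul_sum]
    refine Finset.sum_le_sum fun y _ => ?_
    have tail_nonneg := transferOp_pow_nonneg (K := fun s : X × (ι → ℝ) => p s.1)
      (next := fun s y => (y, s.2 + f s.1 y)) (fun _ _ => hp _ _) hφ n
      (y, (fun j => c (some j)) + f x y)
    have ratio : q x y * Real.exp (-Real.log (q x y / p x y)) ≤ p x y := by
      rcases (hq x y).eq_or_lt with h0 | hpos
      · simpa [← h0] using hp x y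
      · rw [← Real.log_inv, Real.exp_log (inv_pos.2 (div_pos hpos (hqp x y hpos))), inv_div,
          mul_div_cancel₀ _ hpos.ne']
    calc _ ≤ q x y * (Real.exp (-(c none + Real.log (q x y / p x y))) *
          (additiveOp p f ^ n) φ (y, (fun j => c (some j)) + f x y)) :=
          mul_le_mul_of_nonneg_left (ih y (c + withLogRatio q p f x y)) (hq x y)
      _ = (q x y * Real.exp (-Real.log (q x y / p x y))) * (Real.exp (-c none) *
          (additiveOp p f ^ n) φ (y, (fun j => c (some j)) + f x y)) := by
          rw [neg_add, Real.exp_add]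
          ring
      _ ≤ p x y * (Real.exp (-c none) *
          (additiveOp p f ^ n) φ (y, (fun j => c (some j)) + f x y)) :=
          mul_le_mul_of_nonneg_right ratio (mul_nonneg (Real.exp_pos _).le tail_nonneg)
      _ = _ := by ring!

/-- The specific relative entropy of the stationary chain `(m, q)` with respect to `p`. -/
def entropyRate (m : X → ℝ) (q p : Matrix X X ℝ) : ℝ :=
  ∑ x, ∑ y, m x * q x y * Real.log (q x y / p x y)

variable [Fintype ι]

lemma exp_mul_indicator_le_of_withLogRatio (f : X → X → ι → ℝ) (a : ι → ℝ) {ε : ℝ} (hε : 0 < ε)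
    (n : ℕ) (b : Option ι → ℝ) :
    Real.exp (-n * (entropyRate m q p + ε)) *
        (Metric.closedBall ((fun o : Option ι => o.elim 0 a) +
          (n : ℝ) • stationaryMean m q (withLogRatio q p f)) (ε * n)).indicator 1 b ≤
      Real.exp (-b none) * (Metric.closedBall (a + (n : ℝ) • stationaryMean m q f)
        (ε * n)).indicator 1 fun j => b (some j) := by
  have hr : 0 ≤ ε * n := by positivity
  by_cases hb : b ∈ Metric.closedBall ((fun o : Option ι => o.elim 0 a) +
      (n : ℝ) • stationaryMean m q (withLogRatio q p f)) (ε * n)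
  · have hcoord := (dist_pi_le_iff hr).1 hb
    have hnear : (fun j => b (some j)) ∈
        Metric.closedBall (a + (n : ℝ) • stationaryMean m q f) (ε * n) :=
      (dist_pi_le_iff hr).2 fun j => hcoord (some j)
    have hlog : |b none - (0 + n * entropyRate m q p)| ≤ ε * n := hcoord none
    simp only [Set.indicator_of_mem hb, Set.indicator_of_mem hnear, Pi.one_apply, mul_one,
      Real.exp_le_exp]
    linarith [(abs_le.1 hlog).2]
  · rw [Set.indicator_of_notMem hb, mul_zero]
    exact mul_nonneg (Real.exp_pos _).le (Set.indicator_nonneg (fun _ _ => zero_le_one) _)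

lemma IsErgodicChain.eventually_exp_le_additiveOp_pow (hq : IsErgodicChain q m)
    (hp : ∀ x y, 0 ≤ p x y) (hqp : ∀ x y, 0 < q x y → 0 < p x y) (f : X → X → ι → ℝ) {ε : ℝ}
    (hε : 0 < ε) :
    ∀ᶠ n : ℕ in atTop, ∀ (x : X) (a : ι → ℝ),
      Real.exp (-n * (entropyRate m q p + ε)) / 2 ≤ (additiveOp p f ^ n)
        (fun s => (Metric.closedBall (a + (n : ℝ) • stationaryMean m q f) (ε * n)).indicator 1 s.2)
        (x, a) := by
  filter_upwards [hq.eventually_half_le_additiveOp_pow (withLogRatio q p f) hε] with n hn x a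
  set near := fun s : X × (ι → ℝ) =>
    (Metric.closedBall (a + (n : ℝ) • stationaryMean m q f) (ε * n)).indicator (1 : (ι → ℝ) → ℝ) s.2
  set c : Option ι → ℝ := fun o => o.elim 0 a
  set mean := stationaryMean m q (withLogRatio q p f)
  set typical := fun s : X × (Option ι → ℝ) =>
    (Metric.closedBall (c + (n : ℝ) • mean) (ε * n)).indicator (1 : (Option ι → ℝ) → ℝ) s.2
  have near_nonneg : 0 ≤ near := fun s => Set.indicator_nonneg (fun _ _ => zero_le_one) _
  have typical_le : Real.exp (-n * (entropyRate m q p + ε)) • typical ≤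
      fun s => Real.exp (-s.2 none) * near (s.1, fun j => s.2 (some j)) :=
    fun s => exp_mul_indicator_le_of_withLogRatio f a hε n s.2
  calc Real.exp (-n * (entropyRate m q p + ε)) / 2
      ≤ Real.exp (-n * (entropyRate m q p + ε)) *
          (additiveOp q (withLogRatio q p f) ^ n) typical (x, c) := by
        rw [div_eq_mul_one_div]
        exact mul_le_mul_of_nonneg_left (hn x c) (Real.exp_pos _).le
    _ = (additiveOp q (withLogRatio q p f) ^ n)
          (Real.exp (-n * (entropyRate m q p + ε)) • typical) (x, c) := by
        rw [map_smul, Pi.smul_apply, smul_eq_mul]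
    _ ≤ _ := additiveOp_pow_mono hq.nonneg typical_le n (x, c)
    _ ≤ Real.exp (-c none) * (additiveOp p f ^ n) near (x, fun j => c (some j)) :=
        additiveOp_withLogRatio_pow_le hq.nonneg hp hqp f near_nonneg n x c
    _ = (additiveOp p f ^ n) near (x, a) := by simp [c]

end ChangeOfMeasure

/-!
### Pair measures and irreducible circulations
-/

section PairMeasure

universe u

variable {A : Type u} [Fintype A]

/-- First marginal of a pair measure. -/
def rowSum (M : A → A → ℝ) (x : A) : ℝ := ∑ y, M x y

/-- Relative entropy of the pair measure `M` with respect to the kernel `p`, that is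
`∑ M(x,y) log (M(x,y) / (M(x,·) p(x,y)))` with the logarithms separated: in this form it is
continuous in `M`, and it is the right value as long as `p` does not vanish where `M` does not. -/
def pairEntropy (p M : A → A → ℝ) : ℝ :=
  ∑ x, (Real.negMulLog (rowSum M x) -
    ∑ y, (Real.negMulLog (M x y) + M x y * Real.log (p x y)))

lemma rowSum_add (M N : A → A → ℝ) : rowSum (M + N) = rowSum M + rowSum N :=
  funext fun _ => Finset.sum_add_distrib

lemma rowSum_smul (a : ℝ) (M : A → A → ℝ) : rowSum (a • M) = a • rowSum M :=
  funext fun x => (Finset.mul_sum _ (M x) a).symm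

lemma continuous_rowSum : Continuous (rowSum : (A → A → ℝ) → A → ℝ) := by
  unfold rowSum
  fun_prop

lemma continuous_pairEntropy (p : A → A → ℝ) : Continuous (pairEntropy p) := by
  unfold pairEntropy rowSum
  fun_prop

@[simp]
lemma pairEntropy_zero (p : A → A → ℝ) : pairEntropy p 0 = 0 := by
  simp [pairEntropy, rowSum]

lemma pairEntropy_eq_sum {M q : A → A → ℝ} (p : A → A → ℝ)
    (hM : ∀ x y, M x y = rowSum M x * q x y) :
    pairEntropy p M = ∑ x, ∑ y, M x y * (Real.log (q x y) - Real.log (p x y)) := by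
  refine Finset.sum_congr rfl fun x _ => ?_
  have hrow : Real.negMulLog (rowSum M x) = ∑ y, -(M x y * Real.log (rowSum M x)) := by
    rw [Finset.sum_neg_distrib, ← Finset.sum_mul, Real.negMulLog, neg_mul]
    rfl
  rw [hrow, ← Finset.sum_sub_distrib]
  refine Finset.sum_congr rfl fun y _ => ?_
  rcases eq_or_ne (M x y) 0 with h0 | hne
  · simp [h0]
  · have hfactors : rowSum M x ≠ 0 ∧ q x y ≠ 0 := by rwa [hM, mul_ne_zero_iff] at hne
    have hlog : Real.log (M x y) = Real.log (rowSum M x) + Real.log (q x y) := by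
      rw [hM, Real.log_mul hfactors.1 hfactors.2]
    rw [Real.negMulLog, hlog]
    ring

lemma eq_rowSum_mul_div {M : A → A → ℝ} (hM : ∀ x y, 0 ≤ M x y) (x y : A) :
    M x y = rowSum M x * (M x y / rowSum M x) := by
  rcases eq_or_ne (rowSum M x) 0 with h0 | hne
  · rw [h0, zero_mul]
    exact (Finset.sum_eq_zero_iff_of_nonneg fun y _ => hM x y).1 h0 y (Finset.mem_univ y)
  · rw [mul_div_cancel₀ _ hne]

lemma sum_subtype_of_support_subset {B : Type*} [AddCommMonoid B] (C : Set A) (f : A → B)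
    (hf : ∀ x, x ∉ C → f x = 0) : ∑ x : C, f x = ∑ x, f x := by
  rw [← Finset.sum_subtype (Finset.univ.filter (· ∈ C)) (by simp) f]
  exact Finset.sum_filter_of_ne fun x _ hx => by_contra fun hC => hx (hf x hC)

lemma sum_subtype_le_sum (C : Set A) {f : A → ℝ} (hf : 0 ≤ f) : ∑ x : C, f x ≤ ∑ x, f x := by
  rw [← Finset.sum_subtype (Finset.univ.filter (· ∈ C)) (by simp) f]
  exact Finset.sum_le_univ_sum_of_nonneg hf

/-- A nonnegative pair measure carried by `C × C` with equal marginals, whose normalisation is the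
two-step law of a stationary irreducible chain on `C`. -/
structure IsIrreducibleCirculation (C : Set A) (M : A → A → ℝ) : Prop where
  nonneg : ∀ x y, 0 ≤ M x y
  mem_of_pos : ∀ x y, 0 < M x y → x ∈ C ∧ y ∈ C
  balanced : ∀ x, rowSum M x = ∑ y, M y x
  rowSum_pos : ∀ x ∈ C, 0 < rowSum M x
  irreducible : ∀ x ∈ C, ∀ y ∈ C, Relation.ReflTransGen (fun a b => 0 < M a b) x y

namespace IsIrreducibleCirculation

variable {C : Set A} {M : A → A → ℝ}

lemma eq_zero_of_notMem_left (hM : IsIrreducibleCirculation C M) {x : A} (hx : x ∉ C) (y : A) :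
    M x y = 0 :=
  le_antisymm (not_lt.1 fun h => hx (hM.mem_of_pos x y h).1) (hM.nonneg x y)

lemma eq_zero_of_notMem_right (hM : IsIrreducibleCirculation C M) (x : A) {y : A} (hy : y ∉ C) :
    M x y = 0 :=
  le_antisymm (not_lt.1 fun h => hy (hM.mem_of_pos x y h).2) (hM.nonneg x y)

lemma rowSum_eq_zero (hM : IsIrreducibleCirculation C M) {x : A} (hx : x ∉ C) : rowSum M x = 0 :=
  Finset.sum_eq_zero fun y _ => hM.eq_zero_of_notMem_left hx y

lemma sum_rowSum_pos (hM : IsIrreducibleCirculation C M) (hC : C.Nonempty) :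
    0 < ∑ x, rowSum M x :=
  Finset.sum_pos' (fun x _ => Finset.sum_nonneg fun y _ => hM.nonneg x y)
    ⟨hC.some, Finset.mem_univ _, hM.rowSum_pos _ hC.some_mem⟩

lemma sum_subtype_eq_rowSum (hM : IsIrreducibleCirculation C M) (x : A) :
    ∑ y : C, M x y = rowSum M x :=
  sum_subtype_of_support_subset C (M x) fun _ hy => hM.eq_zero_of_notMem_right x hy

lemma reflTransGen_subtype (hM : IsIrreducibleCirculation C M) (x y : C) :
    Relation.ReflTransGen (fun a b : C => 0 < M a b) x y := by
  obtain ⟨x, hx⟩ := x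
  obtain ⟨y, hy⟩ := y
  induction hM.irreducible x hx y hy with
  | refl => rfl
  | @tail b c _ hbc ih => exact (ih (hM.mem_of_pos b c hbc).1).tail hbc

/-- The transition matrix on `C` of the circulation `M`. -/
def kernel (_ : IsIrreducibleCirculation C M) : Matrix C C ℝ := fun x y => M x y / rowSum M x

/-- The stationary distribution on `C` of the circulation `M`. -/
def law (_ : IsIrreducibleCirculation C M) : C → ℝ := fun x => rowSum M x / ∑ y, rowSum M y

lemma law_mul_kernel (hM : IsIrreducibleCirculation C M) (x y : C) :
    hM.law x * hM.kernel x y = M x y / ∑ x, rowSum M x := by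
  rw [law, kernel, div_mul_eq_mul_div, ← eq_rowSum_mul_div hM.nonneg]

lemma isErgodicChain (hM : IsIrreducibleCirculation C M) (hpos : 0 < ∑ x, rowSum M x) :
    IsErgodicChain hM.kernel hM.law where
  nonneg x y := div_nonneg (hM.nonneg x y) (hM.rowSum_pos x x.2).le
  row_sum x := by
    simp only [kernel, ← Finset.sum_div, hM.sum_subtype_eq_rowSum]
    exact div_self (hM.rowSum_pos x x.2).ne'
  irreducible x y := Relation.ReflTransGen.mono
    (fun (a : C) _ hab => div_pos hab (hM.rowSum_pos a a.2)) _ _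
    (hM.reflTransGen_subtype x y)
  pos x := div_pos (hM.rowSum_pos x x.2) hpos
  sum_eq_one := by
    simp only [law]
    rw [← Finset.sum_div,
      sum_subtype_of_support_subset C (rowSum M) fun _ hx => hM.rowSum_eq_zero hx,
      div_self hpos.ne']
  stationary := by
    ext y
    simp only [Matrix.vecMul, dotProduct, hM.law_mul_kernel, ← Finset.sum_div]
    rw [sum_subtype_of_support_subset C (fun x => M x y) fun _ hx =>
      hM.eq_zero_of_notMem_left hx y, ← hM.balanced, law]

lemma entropyRate_eq (hM : IsIrreducibleCirculation C M) {p : A → A → ℝ}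
    (hp : ∀ x y, 0 < M x y → p x y ≠ 0) :
    entropyRate hM.law hM.kernel (fun x y => p x y) = pairEntropy p M / ∑ x, rowSum M x := by
  set term := fun x y => M x y * (Real.log (M x y / rowSum M x) - Real.log (p x y))
  have inner (x : A) : ∑ y : C, term x y = ∑ y, term x y :=
    sum_subtype_of_support_subset C _ fun y hy => by
      simp [term, hM.eq_zero_of_notMem_right x hy]
  have outer : ∑ x : C, ∑ y, term x y = ∑ x, ∑ y, term x y :=
    sum_subtype_of_support_subset C (fun x => ∑ y, term x y) fun x hx => by
      simp [term, hM.eq_zero_of_notMem_left hx]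
  rw [pairEntropy_eq_sum p (eq_rowSum_mul_div hM.nonneg), ← outer, Finset.sum_div]
  refine Finset.sum_congr rfl fun x _ => ?_
  rw [← inner, Finset.sum_div]
  refine Finset.sum_congr rfl fun y _ => ?_
  rw [hM.law_mul_kernel, div_mul_eq_mul_div]
  rcases (hM.nonneg x y).eq_or_lt with h0 | hpos
  · simp [term, ← h0]
  · rw [kernel, Real.log_div (div_pos hpos (hM.rowSum_pos x x.2)).ne' (hp x y hpos)]

lemma stationaryMean_single_eq [DecidableEq A] (hM : IsIrreducibleCirculation C M) :
    stationaryMean hM.law hM.kernel (fun _ y => Pi.single y.1 (1 : ℝ)) =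
      (∑ x, rowSum M x)⁻¹ • rowSum M := by
  ext j
  have column (y : A) : ∑ x : C, M x y = rowSum M y := by
    rw [hM.balanced]
    exact sum_subtype_of_support_subset C (fun x => M x y) fun _ hx =>
      hM.eq_zero_of_notMem_left hx y
  simp only [stationaryMean, hM.law_mul_kernel, Pi.smul_apply, smul_eq_mul]
  rw [Finset.sum_comm]
  simp only [← Finset.sum_mul, ← Finset.sum_div, column]
  rw [sum_subtype_of_support_subset C
      (fun y => rowSum M y / (∑ x, rowSum M x) * (Pi.single y (1 : ℝ) : A → ℝ) j) fun y hy => by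
        simp [hM.rowSum_eq_zero hy],
    Finset.sum_eq_single j (fun y _ hy => by simp [hy.symm]) (by simp)]
  simp [div_eq_inv_mul]

end IsIrreducibleCirculation

end PairMeasure

/-!
### Walks driven by the set of visited labels
-/

section LabelledWalk

universe u v

variable {A : Type u} {α : Type v} [Fintype A] [DecidableEq A] [DecidableEq α]

/-- The transfer operator of the walk on `A` whose kernel `K F` depends on the set `F` of labels
visited so far. A state consists of that set, the current position, and the number of visits to
each point. -/
def walkOp (ℓ : A → α) (K : Finset α → A → A → ℝ) :
    Module.End ℝ (Finset α × A × (A → ℝ) → ℝ) :=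
  transferOp (fun s => K s.1 s.2.1) (fun s w => (insert (ℓ w) s.1, w, s.2.2 + Pi.single w 1))

variable {ℓ : A → α} {K : Finset α → A → A → ℝ}

lemma walkOp_apply (φ : Finset α × A × (A → ℝ) → ℝ) (s : Finset α × A × (A → ℝ)) :
    walkOp ℓ K φ s = ∑ w, K s.1 s.2.1 w * φ (insert (ℓ w) s.1, w, s.2.2 + Pi.single w 1) :=
  rfl

lemma walkOp_pow_mono (hK : ∀ F x y, 0 ≤ K F x y) {φ ψ : Finset α × A × (A → ℝ) → ℝ}
    (hφψ : φ ≤ ψ) (n : ℕ) : (walkOp ℓ K ^ n) φ ≤ (walkOp ℓ K ^ n) ψ :=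
  transferOp_pow_mono (fun (s : Finset α × A × (A → ℝ)) y => hK s.1 s.2.1 y) hφψ n

lemma mul_walkOp_pow_le (hK : ∀ F x y, 0 ≤ K F x y) {φ : Finset α × A × (A → ℝ) → ℝ}
    (hφ : 0 ≤ φ) (n : ℕ) (s : Finset α × A × (A → ℝ)) (w : A) :
    K s.1 s.2.1 w * (walkOp ℓ K ^ n) φ (insert (ℓ w) s.1, w, s.2.2 + Pi.single w 1) ≤
      (walkOp ℓ K ^ (n + 1)) φ s :=
  mul_transferOp_pow_le (fun (s : Finset α × A × (A → ℝ)) y => hK s.1 s.2.1 y) hφ n s w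

lemma walkOp_pow_one_le_one (hK : ∀ F x y, 0 ≤ K F x y) (hsum : ∀ F x, ∑ y, K F x y ≤ 1) (n : ℕ)
    (s : Finset α × A × (A → ℝ)) : (walkOp ℓ K ^ n) 1 s ≤ 1 :=
  transferOp_pow_one_le_one (fun (s : Finset α × A × (A → ℝ)) y => hK s.1 s.2.1 y)
    (fun s => hsum s.1 s.2.1) n s

lemma additiveOp_pow_le_walkOp_pow (hK : ∀ F x y, 0 ≤ K F x y) {C : Set A} {E : Finset α}
    (hC : ∀ x ∈ C, ℓ x ∈ E) {φ : Finset α × A × (A → ℝ) → ℝ} (hφ : 0 ≤ φ) (n : ℕ) (x : C)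
    (c : A → ℝ) :
    (additiveOp (fun x y : C => K E x y) (fun _ y => Pi.single y.1 1) ^ n)
      (fun s => φ (E, s.1.1, s.2)) (x, c) ≤ (walkOp ℓ K ^ n) φ (E, x, c) := by
  induction n generalizing x c with
  | zero => exact le_rfl
  | succ n ih =>
    have hnonneg (s) : 0 ≤ (walkOp ℓ K ^ n) φ s :=
      transferOp_pow_nonneg (fun (s : Finset α × A × (A → ℝ)) y => hK s.1 s.2.1 y) hφ n s
    unfold additiveOp walkOp
    rw [transferOp_pow_succ_apply, transferOp_pow_succ_apply]
    calc _ ≤ ∑ y : C, K E x y *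
          (walkOp ℓ K ^ n) φ (insert (ℓ y) E, y, c + Pi.single y.1 1) := by
          refine Finset.sum_le_sum fun y _ => mul_le_mul_of_nonneg_left ?_ (hK E x y)
          rw [Finset.insert_eq_of_mem (hC y y.2)]
          exact ih y (c + Pi.single y.1 1)
      _ ≤ _ := sum_subtype_le_sum C
          (f := fun y => K E x y * (walkOp ℓ K ^ n) φ (insert (ℓ y) E, y, c + Pi.single y 1))
          fun y => mul_nonneg (hK E x y) (hnonneg _)

lemma IsIrreducibleCirculation.eventually_exp_le_walkOp_pow {C : Set A} {M : A → A → ℝ}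
    (hM : IsIrreducibleCirculation C M) (hpos : 0 < ∑ x, rowSum M x)
    (hK : ∀ F x y, 0 ≤ K F x y) {E : Finset α} (hMK : ∀ x y, 0 < M x y → 0 < K E x y)
    (hC : ∀ x ∈ C, ℓ x ∈ E) {ε : ℝ} (hε : 0 < ε) :
    ∀ᶠ n : ℕ in atTop, ∀ x ∈ C, ∀ c : A → ℝ,
      Real.exp (-n * (pairEntropy (K E) M / (∑ x, rowSum M x) + ε)) / 2 ≤
        (walkOp ℓ K ^ n) (Set.indicator {s | s.1 = E ∧ s.2.1 ∈ C ∧ s.2.2 ∈ Metric.closedBall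
          (c + (n : ℝ) • (∑ x, rowSum M x)⁻¹ • rowSum M) (ε * n)} 1) (E, x, c) := by
  have hqK (x y : C) (h : 0 < hM.kernel x y) : 0 < K E x y :=
    hMK x y ((hM.nonneg x y).lt_of_ne fun h0 => by
      simp [IsIrreducibleCirculation.kernel, ← h0] at h)
  have hchain := (hM.isErgodicChain hpos).eventually_exp_le_additiveOp_pow
    (p := fun x y : C => K E x y) (fun x y => hK E x y) hqK (fun _ y => Pi.single y.1 (1 : ℝ)) hε
  rw [hM.entropyRate_eq fun x y h => (hMK x y h).ne', hM.stationaryMean_single_eq] at hchain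
  filter_upwards [hchain] with n hn x hx c
  refine (hn ⟨x, hx⟩ c).trans (le_of_eq_of_le ?_
    (additiveOp_pow_le_walkOp_pow hK hC (fun s => Set.indicator_nonneg (by simp) s) n ⟨x, hx⟩ c))
  refine congrFun (congrArg _ (funext fun s => ?_)) _
  simp [Set.indicator_apply]

end LabelledWalk

section Trajectory

universe u v

variable {A : Type u} {α : Type v} [DecidableEq α] {n : ℕ}

/-- The labels visited by the path `g` up to time `i`. -/
def visited (ℓ : A → α) (g : Fin (n + 1) → A) (i : Fin (n + 1)) : Finset α :=
  (Finset.Iic i).image fun j => ℓ (g j)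

/-- The weight of the path `g` under the kernels `K F`, where `F` is the set of visited labels. -/
def pathWeight (ℓ : A → α) (K : Finset α → A → A → ℝ) (g : Fin (n + 1) → A) : ℝ :=
  ∏ i : Fin n, K (visited ℓ g i.castSucc) (g i.castSucc) (g i.succ)

/-- The number of visits of the path `g` to each point. -/
def visitCount [DecidableEq A] (g : Fin (n + 1) → A) : A → ℝ := ∑ i, Pi.single (g i) 1

variable {ℓ : A → α} {K : Finset α → A → A → ℝ} {g : Fin (n + 1) → A}

@[simp]
lemma mem_visited {i : Fin (n + 1)} {e : α} : e ∈ visited ℓ g i ↔ ∃ j ≤ i, ℓ (g j) = e := by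
  simp [visited]

lemma visited_zero (g : Fin (n + 1) → A) : visited ℓ g 0 = {ℓ (g 0)} := by
  ext e
  simp [eq_comm]

lemma visited_succ (g : Fin (n + 1) → A) (i : Fin n) :
    visited ℓ g i.succ = insert (ℓ (g i.succ)) (visited ℓ g i.castSucc) := by
  have hIic : Finset.Iic i.succ = insert i.succ (Finset.Iic i.castSucc) := by
    ext j
    simp only [Finset.mem_Iic, Finset.mem_insert, Fin.le_def, Fin.ext_iff, Fin.val_succ,
      Fin.val_castSucc]
    lia
  rw [visited, hIic, Finset.image_insert, visited]

lemma visited_snoc_castSucc (g : Fin (n + 1) → A) (y : A) (i : Fin (n + 1)) :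
    visited ℓ (Fin.snoc g y : Fin (n + 2) → A) i.castSucc = visited ℓ g i := by
  ext e
  simp only [mem_visited]
  constructor
  · rintro ⟨j, hj, rfl⟩
    induction j using Fin.lastCases with
    | last => exact absurd hj (Fin.castSucc_lt_last i).not_ge
    | cast j => exact ⟨j, by simpa using hj, by simp⟩
  · rintro ⟨j, hj, rfl⟩
    exact ⟨j.castSucc, by simpa using hj, by simp⟩

lemma visited_snoc_last (g : Fin (n + 1) → A) (y : A) :
    visited ℓ (Fin.snoc g y : Fin (n + 2) → A) (Fin.last (n + 1)) =
      insert (ℓ y) (visited ℓ g (Fin.last n)) := by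
  ext e
  simp [Fin.exists_fin_succ', Fin.le_last, or_comm, eq_comm]

lemma pathWeight_snoc (g : Fin (n + 1) → A) (y : A) :
    pathWeight ℓ K (Fin.snoc g y : Fin (n + 2) → A) =
      pathWeight ℓ K g * K (visited ℓ g (Fin.last n)) (g (Fin.last n)) y := by
  simp only [pathWeight, Fin.prod_univ_castSucc, visited_snoc_castSucc, Fin.snoc_castSucc,
    Fin.succ_last, Fin.snoc_last, ← Fin.castSucc_succ]

lemma pathWeight_nonneg (hK : ∀ F x y, 0 ≤ K F x y) (g : Fin (n + 1) → A) :
    0 ≤ pathWeight ℓ K g :=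
  Finset.prod_nonneg fun _ _ => hK _ _ _

lemma sum_card_visited_sub_le [Fintype α] (ℓ : A → α) (g : Fin (n + 1) → A) :
    ∑ i : Fin n, ((visited ℓ g i.succ).card - (visited ℓ g i.castSucc).card : ℝ) ≤
      Fintype.card α := by
  have hsucc := Fin.sum_univ_succ fun j => ((visited ℓ g j).card : ℝ)
  have hcastSucc := Fin.sum_univ_castSucc fun j => ((visited ℓ g j).card : ℝ)
  have hlast : ((visited ℓ g (Fin.last n)).card : ℝ) ≤ Fintype.card α := by
    exact_mod_cast Finset.card_le_univ _
  rw [Finset.sum_sub_distrib]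
  linarith [Nat.cast_nonneg (α := ℝ) (visited ℓ g 0).card]

variable [Fintype A] [DecidableEq A]

lemma sum_pathWeight_mul (ℓ : A → α) (K : Finset α → A → A → ℝ) (z : A) (n : ℕ)
    (φ : Finset α × A × (A → ℝ) → ℝ) :
    ∑ g : Fin (n + 1) → A with g 0 = z,
      pathWeight ℓ K g * φ (visited ℓ g (Fin.last n), g (Fin.last n), visitCount g) =
      (walkOp ℓ K ^ n) φ ({ℓ z}, z, Pi.single z 1) := by
  induction n generalizing φ with
  | zero =>
    have hfilter : (Finset.univ.filter fun g : Fin 1 → A => g 0 = z) = {fun _ => z} := by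
      ext g
      simp [funext_iff]
    have hvisited : visited ℓ (fun _ : Fin 1 => z) (Fin.last 0) = {ℓ z} := visited_zero _
    rw [hfilter, Finset.sum_singleton, hvisited]
    simp [pathWeight, visitCount]
  | succ n ih =>
    rw [pow_succ, Module.End.mul_apply, ← ih, Finset.sum_filter, Finset.sum_filter,
      ← (Fin.snocEquiv fun _ => A).sum_comp, Fintype.sum_prod_type_right]
    refine Finset.sum_congr rfl fun g _ => ?_
    have hequiv (y : A) : (Fin.snocEquiv fun _ => A) (y, g) = Fin.snoc g y := rfl
    have hstart (y : A) : (Fin.snoc g y : Fin (n + 2) → A) 0 = g 0 :=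
      Fin.snoc_castSucc (i := 0) (α := fun _ => A) y g
    have hcount (y : A) :
        visitCount (Fin.snoc g y : Fin (n + 2) → A) = visitCount g + Pi.single y 1 := by
      simp [visitCount, Fin.sum_univ_castSucc]
    simp only [hequiv, hstart, hcount, visited_snoc_last, pathWeight_snoc,
      Fin.snoc_last, walkOp_apply]
    split_ifs
    · simp only [Finset.mul_sum, mul_assoc]
    · simp

lemma sum_pathWeight_le_one (hK : ∀ F x y, 0 ≤ K F x y) (hsum : ∀ F x, ∑ y, K F x y ≤ 1) (z : A)
    (n : ℕ) : ∑ g : Fin (n + 1) → A with g 0 = z, pathWeight ℓ K g ≤ 1 := by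
  simpa using (sum_pathWeight_mul ℓ K z n 1).trans_le (walkOp_pow_one_le_one hK hsum n _)

end Trajectory

/-!
### The method of types
-/

section CountKernel

universe u v

variable {A : Type u} {α : Type v} [Fintype A]

/-- The transition frequencies of a type; this is the kernel under which the paths of that type
have the largest weight. -/
def countKernel (N : Finset α × A × A → ℕ) (F : Finset α) (x y : A) : ℝ :=
  N (F, x, y) / ∑ w, (N (F, x, w) : ℝ)

lemma countKernel_nonneg (N : Finset α × A × A → ℕ) (F : Finset α) (x y : A) :
    0 ≤ countKernel N F x y := by
  unfold countKernel
  positivity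

lemma sum_countKernel_le_one (N : Finset α × A × A → ℕ) (F : Finset α) (x : A) :
    ∑ y, countKernel N F x y ≤ 1 := by
  simp only [countKernel, ← Finset.sum_div]
  exact div_self_le_one _

end CountKernel

section Types

universe u v

variable {A : Type u} {α : Type v} [DecidableEq A] [DecidableEq α] {n : ℕ} {ℓ : A → α}
  {K : Finset α → A → A → ℝ}

/-- The `i`-th transition of the path `g`, with the set of labels visited before it. -/
def transition (ℓ : A → α) (g : Fin (n + 1) → A) (i : Fin n) : Finset α × A × A :=
  (visited ℓ g i.castSucc, g i.castSucc, g i.succ)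

/-- The type of the path `g`: the number of occurrences of each transition. -/
def transitionCount (ℓ : A → α) (g : Fin (n + 1) → A) (t : Finset α × A × A) : ℕ :=
  (Finset.univ.filter fun i => transition ℓ g i = t).card

/-- The empirical pair measure of the transitions made by `g` while the set of visited labels is
`F`. -/
def transitionMeasure (ℓ : A → α) (g : Fin (n + 1) → A) (F : Finset α) (x y : A) : ℝ :=
  transitionCount ℓ g (F, x, y) / (n + 1)

lemma transitionCount_le (g : Fin (n + 1) → A) (t : Finset α × A × A) :
    transitionCount ℓ g t ≤ n :=
  (Finset.card_le_univ _).trans_eq (Fintype.card_fin n)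

lemma transitionCount_transition_pos (g : Fin (n + 1) → A) (i : Fin n) :
    0 < transitionCount ℓ g (transition ℓ g i) :=
  Finset.card_pos.2 ⟨i, by simp⟩

lemma transitionCount_eq_sum (g : Fin (n + 1) → A) (F : Finset α) (x y : A) :
    (transitionCount ℓ g (F, x, y) : ℝ) = ∑ i : Fin n, if visited ℓ g i.castSucc = F then
      if g i.castSucc = x then if g i.succ = y then 1 else 0 else 0 else 0 := by
  simp only [transitionCount, transition, Prod.mk.injEq, Finset.card_filter, Nat.cast_sum,
    Nat.cast_ite, Nat.cast_one, Nat.cast_zero, ite_and]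

lemma transitionMeasure_nonneg (g : Fin (n + 1) → A) (F : Finset α) (x y : A) :
    0 ≤ transitionMeasure ℓ g F x y := by
  unfold transitionMeasure
  positivity

lemma transitionMeasure_le_one (g : Fin (n + 1) → A) (F : Finset α) (x y : A) :
    transitionMeasure ℓ g F x y ≤ 1 := by
  have : (transitionCount ℓ g (F, x, y) : ℝ) ≤ n := by exact_mod_cast transitionCount_le g _
  rw [transitionMeasure, div_le_one (by positivity)]
  linarith

lemma exists_transition_eq {g : Fin (n + 1) → A} {F : Finset α} {x y : A}
    (h : transitionMeasure ℓ g F x y ≠ 0) : ∃ i, transition ℓ g i = (F, x, y) := by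
  rw [transitionMeasure, div_ne_zero_iff, Nat.cast_ne_zero, ← Nat.pos_iff_ne_zero,
    transitionCount, Finset.card_pos] at h
  obtain ⟨i, hi⟩ := h.1
  exact ⟨i, (Finset.mem_filter.1 hi).2⟩

variable [Fintype A]

lemma countKernel_transitionCount_pos (g : Fin (n + 1) → A) (i : Fin n) :
    0 < countKernel (transitionCount ℓ g) (visited ℓ g i.castSucc) (g i.castSucc) (g i.succ) := by
  have hpos : (0 : ℝ) < transitionCount ℓ g (transition ℓ g i) :=
    Nat.cast_pos.2 (transitionCount_transition_pos g i)
  refine div_pos hpos (hpos.trans_le ?_)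
  exact Finset.single_le_sum
    (f := fun w => (transitionCount ℓ g (visited ℓ g i.castSucc, g i.castSucc, w) : ℝ))
    (fun _ _ => Nat.cast_nonneg _) (Finset.mem_univ (g i.succ))

variable [Fintype α]

lemma sum_transitionCount_mul (g : Fin (n + 1) → A) (f : Finset α × A × A → ℝ) :
    ∑ t, transitionCount ℓ g t * f t = ∑ i, f (transition ℓ g i) := by
  rw [← Finset.sum_fiberwise' Finset.univ (transition ℓ g) f]
  simp only [transitionCount, Finset.sum_const, nsmul_eq_mul]

lemma pathWeight_eq_exp {g : Fin (n + 1) → A}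
    (hK : ∀ i : Fin n, 0 < K (visited ℓ g i.castSucc) (g i.castSucc) (g i.succ)) :
    pathWeight ℓ K g =
      Real.exp (∑ t, transitionCount ℓ g t * Real.log (K t.1 t.2.1 t.2.2)) := by
  rw [sum_transitionCount_mul g fun t => Real.log (K t.1 t.2.1 t.2.2), Real.exp_sum]
  exact Finset.prod_congr rfl fun i _ => (Real.exp_log (hK i)).symm

lemma mul_sum_pairEntropy_transitionMeasure (g : Fin (n + 1) → A) :
    (n + 1) * ∑ F, pairEntropy (K F) (transitionMeasure ℓ g F) =
      ∑ t, transitionCount ℓ g t *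
        (Real.log (countKernel (transitionCount ℓ g) t.1 t.2.1 t.2.2) -
          Real.log (K t.1 t.2.1 t.2.2)) := by
  have hn : (n + 1 : ℝ) ≠ 0 := by positivity
  have hdiv (F : Finset α) (x y : A) : transitionMeasure ℓ g F x y /
      rowSum (transitionMeasure ℓ g F) x = countKernel (transitionCount ℓ g) F x y := by
    simp only [rowSum, transitionMeasure, countKernel, ← Finset.sum_div]
    exact div_div_div_cancel_right₀ hn _ _
  simp only [pairEntropy_eq_sum _ (eq_rowSum_mul_div (transitionMeasure_nonneg g _)), hdiv,
    Fintype.sum_prod_type, Finset.mul_sum]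
  refine Finset.sum_congr rfl fun F _ => Finset.sum_congr rfl fun x _ =>
    Finset.sum_congr rfl fun y _ => ?_
  rw [← mul_assoc, transitionMeasure, mul_div_cancel₀ _ hn]

lemma pathWeight_eq_mul_exp (hK : ∀ F x y, 0 ≤ K F x y) {g : Fin (n + 1) → A}
    (hg : pathWeight ℓ K g ≠ 0) :
    pathWeight ℓ K g = pathWeight ℓ (countKernel (transitionCount ℓ g)) g *
      Real.exp (-(n + 1) * ∑ F, pairEntropy (K F) (transitionMeasure ℓ g F)) := by
  have hpos (i : Fin n) : 0 < K (visited ℓ g i.castSucc) (g i.castSucc) (g i.succ) :=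
    (hK _ _ _).lt_of_ne (Finset.prod_ne_zero_iff.1 hg i (Finset.mem_univ i)).symm
  rw [pathWeight_eq_exp hpos, pathWeight_eq_exp (countKernel_transitionCount_pos g),
    ← Real.exp_add, neg_mul, mul_sum_pairEntropy_transitionMeasure, ← sub_eq_add_neg,
    ← Finset.sum_sub_distrib]
  simp only [mul_sub, sub_sub_cancel]

lemma sum_pathWeight_countKernel_le (ℓ : A → α) (z : A) (n : ℕ) :
    ∑ g : Fin (n + 1) → A with g 0 = z, pathWeight ℓ (countKernel (transitionCount ℓ g)) g ≤
      (n + 1 : ℝ) ^ Fintype.card (Finset α × A × A) := by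
  set types := Fintype.piFinset fun _ : Finset α × A × A => Finset.range (n + 1)
  have hmaps : ∀ g ∈ Finset.univ.filter (fun g : Fin (n + 1) → A => g 0 = z),
      transitionCount ℓ g ∈ types := fun g _ =>
    Fintype.mem_piFinset.2 fun t => Finset.mem_range_succ_iff.2 (transitionCount_le g t)
  rw [← Finset.sum_fiberwise_of_maps_to hmaps]
  calc _ ≤ ∑ _N ∈ types, (1 : ℝ) := by
        refine Finset.sum_le_sum fun N _ => ?_
        refine le_trans ?_ (sum_pathWeight_le_one (ℓ := ℓ) (countKernel_nonneg N)
          (sum_countKernel_le_one N) z n)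
        rw [Finset.sum_congr rfl fun g hg => by rw [(Finset.mem_filter.1 hg).2]]
        exact Finset.sum_le_sum_of_subset_of_nonneg (Finset.filter_subset _ _) fun g _ _ =>
          pathWeight_nonneg (countKernel_nonneg N) g
    _ = _ := by simp [types]

lemma sum_exp_mul_pathWeight_le (hK : ∀ F x y, 0 ≤ K F x y) {z : A}
    {paths : Finset (Fin (n + 1) → A)} (hz : ∀ g ∈ paths, g 0 = z)
    {ψ : (Fin (n + 1) → A) → ℝ} {a : ℝ} (ha : ∀ g ∈ paths, pathWeight ℓ K g ≠ 0 →
      a ≤ ∑ F, pairEntropy (K F) (transitionMeasure ℓ g F) + ψ g) :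
    ∑ g ∈ paths, Real.exp (-(n + 1) * ψ g) * pathWeight ℓ K g ≤
      (n + 1 : ℝ) ^ Fintype.card (Finset α × A × A) * Real.exp (-(n + 1) * a) := by
  have hnonneg (g : Fin (n + 1) → A) : 0 ≤ pathWeight ℓ (countKernel (transitionCount ℓ g)) g :=
    pathWeight_nonneg (countKernel_nonneg _) g
  calc _ ≤ ∑ g ∈ paths,
          pathWeight ℓ (countKernel (transitionCount ℓ g)) g * Real.exp (-(n + 1) * a) := by
        refine Finset.sum_le_sum fun g hg => ?_
        by_cases hw : pathWeight ℓ K g = 0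
        · rw [hw, mul_zero]
          exact mul_nonneg (hnonneg g) (Real.exp_pos _).le
        · rw [pathWeight_eq_mul_exp hK hw, mul_left_comm, ← Real.exp_add, ← mul_add]
          refine mul_le_mul_of_nonneg_left (Real.exp_le_exp.2 ?_) (hnonneg g)
          exact mul_le_mul_of_nonpos_left ((ha g hg hw).trans_eq (add_comm _ _))
            (by linarith [n.cast_nonneg (α := ℝ)])
    _ ≤ _ := by
        rw [← Finset.sum_mul]
        refine mul_le_mul_of_nonneg_right (le_trans ?_ (sum_pathWeight_countKernel_le ℓ z n))
          (Real.exp_pos _).le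
        exact Finset.sum_le_sum_of_subset_of_nonneg (fun g hg => by simp [hz g hg])
          fun g _ _ => hnonneg g

end Types

section LimitsOfTypes

universe u v

variable {A : Type u} {α : Type v} [Fintype A] [DecidableEq A] [DecidableEq α] {n : ℕ} {ℓ : A → α}

lemma rowSum_transitionMeasure (g : Fin (n + 1) → A) (F : Finset α) (x : A) :
    rowSum (transitionMeasure ℓ g F) x =
      (∑ i : Fin n, if visited ℓ g i.castSucc = F ∧ g i.castSucc = x then 1 else 0) /
        (n + 1) := by
  simp only [rowSum, transitionMeasure, ← Finset.sum_div, transitionCount_eq_sum]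
  rw [Finset.sum_comm]
  simp [Finset.sum_ite_irrel, ite_and]

lemma sum_transitionMeasure_left (g : Fin (n + 1) → A) (F : Finset α) (y : A) :
    ∑ x, transitionMeasure ℓ g F x y =
      (∑ i : Fin n, if visited ℓ g i.castSucc = F ∧ g i.succ = y then 1 else 0) / (n + 1) := by
  simp only [transitionMeasure, ← Finset.sum_div, transitionCount_eq_sum]
  rw [Finset.sum_comm]
  simp [Finset.sum_ite_irrel, ite_and]

lemma tendsto_rowSum_transitionMeasure {ι : Type*} {l : Filter ι} {u : ι → ℕ}
    {g : ∀ i, Fin (u i + 1) → A}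
    {M : Finset α → A → A → ℝ} (hM : Tendsto (fun i => transitionMeasure ℓ (g i)) l (𝓝 M))
    (F : Finset α) (x : A) :
    Tendsto (fun i => rowSum (transitionMeasure ℓ (g i) F) x) l (𝓝 (rowSum (M F) x)) :=
  tendsto_finsetSum _ fun y _ => ((hM.apply_nhds F).apply_nhds x).apply_nhds y

variable [Fintype α]

lemma sum_rowSum_transitionMeasure (g : Fin (n + 1) → A) :
    ∑ F, ∑ x, rowSum (transitionMeasure ℓ g F) x = 1 - 1 / (n + 1) := by
  have hcount := sum_transitionCount_mul (ℓ := ℓ) g fun _ => 1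
  simp only [mul_one, Fintype.sum_prod_type, Finset.sum_const, Finset.card_univ,
    Fintype.card_fin, nsmul_eq_mul] at hcount
  simp only [rowSum, transitionMeasure, ← Finset.sum_div, hcount]
  field_simp
  ring

lemma visitCount_sub_sum_rowSum_transitionMeasure (g : Fin (n + 1) → A) (x : A) :
    visitCount g x / (n + 1) - ∑ F, rowSum (transitionMeasure ℓ g F) x =
      (Pi.single (g (Fin.last n)) 1 : A → ℝ) x / (n + 1) := by
  simp only [rowSum, transitionMeasure, ← Finset.sum_div, ← sub_div, transitionCount_eq_sum]
  congr 1
  rw [Finset.sum_congr rfl fun F _ => Finset.sum_comm, Finset.sum_comm, visitCount,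
    Fin.sum_univ_castSucc, Pi.add_apply, Finset.sum_apply]
  simp [Finset.sum_ite_irrel, Pi.single_apply, eq_comm]

-- The set of visited labels changes at most `Fintype.card α` times, and between two changes the
-- path enters and leaves `x` equally often, up to one visit.
lemma abs_rowSum_transitionMeasure_sub_le (g : Fin (n + 1) → A) (F : Finset α) (x : A) :
    |rowSum (transitionMeasure ℓ g F) x - ∑ y, transitionMeasure ℓ g F y x| ≤
      (Fintype.card α + 1) / (n + 1) := by
  set occ : Fin (n + 1) → ℝ := fun j => if visited ℓ g j = F ∧ g j = x then 1 else 0 with hocc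
  set entry : Fin n → ℝ :=
    fun i => if visited ℓ g i.castSucc = F ∧ g i.succ = x then 1 else 0 with hentry
  have hshift : |∑ i : Fin n, occ i.castSucc - ∑ i : Fin n, occ i.succ| ≤ 1 := by
    have hsub : ∑ i : Fin n, occ i.castSucc - ∑ i : Fin n, occ i.succ =
        occ 0 - occ (Fin.last n) := by
      linarith [Fin.sum_univ_succ occ, Fin.sum_univ_castSucc occ]
    rw [hsub]
    simp only [hocc]
    split_ifs <;> norm_num
  have hstep (i : Fin n) : |occ i.succ - entry i| ≤
      (visited ℓ g i.succ).card - (visited ℓ g i.castSucc).card := by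
    simp only [hocc, hentry, visited_succ]
    by_cases hmem : ℓ (g i.succ) ∈ visited ℓ g i.castSucc
    · rw [Finset.insert_eq_self.2 hmem]
      simp
    · rw [Finset.card_insert_of_notMem hmem]
      push_cast
      split_ifs <;> simp
  have hchange : |∑ i : Fin n, occ i.succ - ∑ i, entry i| ≤ Fintype.card α := by
    rw [← Finset.sum_sub_distrib]
    exact (Finset.abs_sum_le_sum_abs _ _).trans
      ((Finset.sum_le_sum fun i _ => hstep i).trans (sum_card_visited_sub_le ℓ g))
  have hn : (0 : ℝ) < n + 1 := by positivity
  rw [rowSum_transitionMeasure, sum_transitionMeasure_left, ← sub_div, abs_div, abs_of_pos hn]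
  refine div_le_div_of_nonneg_right ?_ hn.le
  exact (abs_sub_le _ (∑ i : Fin n, occ i.succ) _).trans (by linarith)

/-- A family of circulations, one for each set of visited labels, of total mass one: the possible
limits of the transition measures of long paths. -/
structure IsCirculationFamily (M : Finset α → A → A → ℝ) : Prop where
  nonneg : ∀ F x y, 0 ≤ M F x y
  sum_eq_one : ∑ F, ∑ x, rowSum (M F) x = 1
  balanced : ∀ F x, rowSum (M F) x = ∑ y, M F y x

variable {ι : Type*} {l : Filter ι} {u : ι → ℕ} {g : ∀ i, Fin (u i + 1) → A}
  {M : Finset α → A → A → ℝ}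

lemma tendsto_div_natCast_add_one (hu : Tendsto u l atTop) (a : ℝ) :
    Tendsto (fun i => a / (u i + 1)) l (𝓝 0) :=
  ((tendsto_natCast_atTop_atTop.comp hu).atTop_add tendsto_const_nhds).const_div_atTop a

lemma isCirculationFamily_of_tendsto [l.NeBot] (hu : Tendsto u l atTop)
    (hM : Tendsto (fun i => transitionMeasure ℓ (g i)) l (𝓝 M)) : IsCirculationFamily M where
  nonneg F x y := ge_of_tendsto' (((hM.apply_nhds F).apply_nhds x).apply_nhds y) fun i =>
    transitionMeasure_nonneg (g i) F x y
  sum_eq_one := by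
    have hlim := tendsto_finsetSum Finset.univ fun F _ =>
      tendsto_finsetSum Finset.univ fun x _ => tendsto_rowSum_transitionMeasure hM F x
    simp only [sum_rowSum_transitionMeasure] at hlim
    simpa using tendsto_nhds_unique hlim
      (tendsto_const_nhds.sub (tendsto_div_natCast_add_one hu 1))
  balanced F x := by
    have hcol := tendsto_finsetSum Finset.univ fun y _ =>
      ((hM.apply_nhds F).apply_nhds y).apply_nhds x
    have hdiff := squeeze_zero (fun _ => abs_nonneg _)
      (fun i => abs_rowSum_transitionMeasure_sub_le (ℓ := ℓ) (g i) F x)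
      (tendsto_div_natCast_add_one hu _)
    have hlim := ((tendsto_rowSum_transitionMeasure hM F x).sub hcol).abs
    exact sub_eq_zero.1 (abs_eq_zero.1 (tendsto_nhds_unique hlim hdiff))

lemma tendsto_visitCount_div (hu : Tendsto u l atTop)
    (hM : Tendsto (fun i => transitionMeasure ℓ (g i)) l (𝓝 M)) (x : A) :
    Tendsto (fun i => visitCount (g i) x / (u i + 1)) l (𝓝 (∑ F, rowSum (M F) x)) := by
  have hlast : Tendsto (fun i => (Pi.single (g i (Fin.last (u i))) 1 : A → ℝ) x / (u i + 1)) l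
      (𝓝 0) := by
    refine squeeze_zero (fun i => div_nonneg ?_ (by positivity)) (fun i =>
      div_le_div_of_nonneg_right ?_ (by positivity)) (tendsto_div_natCast_add_one hu 1) <;>
    · rw [Pi.single_apply]
      split_ifs <;> norm_num
  have hsum := tendsto_finsetSum Finset.univ fun F _ => tendsto_rowSum_transitionMeasure hM F x
  have hlim := hlast.add hsum
  rw [zero_add] at hlim
  refine hlim.congr fun i => ?_
  rw [← visitCount_sub_sum_rowSum_transitionMeasure (ℓ := ℓ), sub_add_cancel]

end LimitsOfTypes

/-!
### The lifted graph
-/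

section LiftedGraph

variable {V : Type}

lemma reachable_fromEdgeSet_of_mem {s : Set (Sym2 V)} {e : Sym2 V} (he : e ∈ s) {x y : V}
    (hx : x ∈ e) (hy : y ∈ e) : (SimpleGraph.fromEdgeSet s).Reachable x y := by
  rcases eq_or_ne x y with rfl | hxy
  · exact .rfl
  · have hadj : (SimpleGraph.fromEdgeSet s).Adj x y := by
      rw [SimpleGraph.fromEdgeSet_adj, ← (Sym2.mem_and_mem_iff hxy).1 ⟨hx, hy⟩]
      exact ⟨he, hxy⟩
    exact hadj.reachable

lemma singleton_mem_scrS [Fintype V] {G : SimpleGraph V} [DecidableRel G.Adj] {v₁ : V}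
    {e : Sym2 V} (he : e ∈ G.edgeFinset) (hv : v₁ ∈ e) : {e} ∈ scrS G v₁ := by
  refine ⟨by simpa using he, ⟨e, by simp, hv⟩, ?_⟩
  rintro x y ⟨d, hd, hx⟩ ⟨d', hd', hy⟩
  obtain rfl := Finset.mem_singleton.1 hd
  obtain rfl := Finset.mem_singleton.1 hd'
  exact reachable_fromEdgeSet_of_mem hd hx hy

lemma gw_pos [DecidableEq V] {δ : ℝ} (hδ : 0 < δ) (F : Finset (Sym2 V)) (e : Sym2 V) :
    0 < gw δ F e := by
  unfold gw
  split_ifs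
  exacts [hδ, one_pos]

lemma mk_sym2lo_sym2hi [LinearOrder V] (e : Sym2 V) : s(sym2lo e, sym2hi e) = e := by
  induction e with
  | _ a b => rcases le_total a b with h | h <;> simp [sym2lo, sym2hi, h, Sym2.eq_swap]

variable [Fintype V] [LinearOrder V] {G : SimpleGraph V} [DecidableRel G.Adj]

/-- The oriented edge `z` with its endpoints exchanged. -/
def reverse (z : VSet G) : VSet G := (z.1, !z.2)

@[simp]
lemma zm_reverse (z : VSet G) : zm G (reverse z) = zp G z := by
  obtain ⟨e, _ | _⟩ := z <;> simp [reverse, zm, zp]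

@[simp]
lemma zp_reverse (z : VSet G) : zp G (reverse z) = zm G z := by
  obtain ⟨e, _ | _⟩ := z <;> simp [reverse, zm, zp]

lemma mk_zm_zp (z : VSet G) : s(zm G z, zp G z) = z.1.1 := by
  obtain ⟨e, _ | _⟩ := z
  · simpa [zm, zp, Sym2.eq_swap] using mk_sym2lo_sym2hi e.1
  · simpa [zm, zp] using mk_sym2lo_sym2hi e.1

lemma zm_mem (z : VSet G) : zm G z ∈ z.1.1 := by
  rw [← mk_zm_zp z]
  exact Sym2.mem_mk_left _ _

lemma zp_mem (z : VSet G) : zp G z ∈ z.1.1 := by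
  rw [← mk_zm_zp z]
  exact Sym2.mem_mk_right _ _

lemma exists_zm_eq_of_mem {e : Sym2 V} (he : e ∈ G.edgeFinset) {v : V} (hv : v ∈ e) :
    ∃ z : VSet G, z.1.1 = e ∧ zm G z = v := by
  have hends : v = zm G (⟨e, he⟩, true) ∨ v = zp G (⟨e, he⟩, true) := by
    rwa [← Sym2.mem_iff, mk_zm_zp]
  rcases hends with rfl | rfl
  · exact ⟨(⟨e, he⟩, true), rfl, rfl⟩
  · exact ⟨reverse (⟨e, he⟩, true), rfl, zm_reverse _⟩

lemma exists_zm_eq_zp_eq_of_adj {x y : V} (hxy : G.Adj x y) :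
    ∃ z : VSet G, z.1.1 = s(x, y) ∧ zm G z = x ∧ zp G z = y := by
  obtain ⟨z, hz, hzm⟩ := exists_zm_eq_of_mem (G := G) (e := s(x, y)) (by simpa using hxy)
    (Sym2.mem_mk_left x y)
  have hmk := mk_zm_zp z
  rw [hz, hzm] at hmk
  exact ⟨z, hz, hzm, Sym2.congr_right.1 hmk⟩

section Kernel

variable {δ : ℝ}

lemma sum_gw_pos (hδ : 0 < δ) (F : Finset (Sym2 V)) (z : VSet G) :
    0 < ∑ w : VSet G, if zp G z = zm G w then gw δ F w.1.1 else 0 := by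
  refine Finset.sum_pos' (fun w _ => ?_) ⟨reverse z, Finset.mem_univ _, ?_⟩
  · split_ifs
    exacts [(gw_pos hδ _ _).le, le_rfl]
  · simpa using gw_pos hδ F _

lemma pS_nonneg (hδ : 0 < δ) (F : Finset (Sym2 V)) (z w : VSet G) : 0 ≤ pS G δ F z w := by
  unfold pS
  split_ifs
  exacts [(div_pos (gw_pos hδ _ _) (sum_gw_pos hδ F z)).le, le_rfl]

lemma sum_pS (hδ : 0 < δ) (F : Finset (Sym2 V)) (z : VSet G) : ∑ w, pS G δ F z w = 1 := by
  rw [← div_self (sum_gw_pos hδ F z).ne', Finset.sum_div]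
  simp only [pS, ite_div, zero_div]

lemma pS_ne_zero_iff (hδ : 0 < δ) {F : Finset (Sym2 V)} {z w : VSet G} :
    pS G δ F z w ≠ 0 ↔ zp G z = zm G w := by
  unfold pS
  split_ifs with h
  · simpa [h] using ⟨(gw_pos hδ _ _).ne', h ▸ (sum_gw_pos hδ F z).ne'⟩
  · simpa using h

lemma eq_zero_of_pS_eq_zero (hδ : 0 < δ) {F : Finset (Sym2 V)} {q : VSet G → VSet G → ℝ}
    (hq : q ∈ TS G) (z w : VSet G) (h : pS G δ F z w = 0) : q z w = 0 :=
  by_contra fun hne => (pS_ne_zero_iff hδ).2 (hq.2.2 z w hne) h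

lemma pS_pos (hδ : 0 < δ) (F : Finset (Sym2 V)) {z w : VSet G} (h : zp G z = zm G w) :
    0 < pS G δ F z w :=
  (pS_nonneg hδ F z w).lt_of_ne' ((pS_ne_zero_iff hδ).2 h)

end Kernel

section ConnectedEdgeSets

variable {v₁ : V} {E : Finset (Sym2 V)}

lemma insert_mem_scrS (hE : E ∈ scrS G v₁) {e e' : Sym2 V} (he : e ∈ G.edgeFinset) (he' : e' ∈ E)
    (hadj : edgeAdj e e') : insert e E ∈ scrS G v₁ := by
  obtain ⟨hsub, ⟨e₁, he₁, hv₁⟩, hconn⟩ := hE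
  obtain ⟨v, hve, hve'⟩ := hadj
  have hv (x : V) (hx : memVerts (insert e E) x) :
      (SimpleGraph.fromEdgeSet (↑(insert e E) : Set (Sym2 V))).Reachable x v := by
    obtain ⟨d, hd, hxd⟩ := hx
    rcases Finset.mem_insert.1 hd with rfl | hdE
    · exact reachable_fromEdgeSet_of_mem (Finset.mem_coe.2 hd) hxd hve
    · exact (hconn x v ⟨d, hdE, hxd⟩ ⟨e', he', hve'⟩).mono
        (SimpleGraph.fromEdgeSet_mono (Finset.coe_subset.2 (Finset.subset_insert e E)))
  exact ⟨Finset.insert_subset he hsub, ⟨e₁, Finset.mem_insert_of_mem he₁, hv₁⟩,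
    fun x y hx hy => (hv x hx).trans (hv y hy).symm⟩

/-- The oriented edges `z` and `w` lie over `E` and `w` starts where `z` ends. -/
def IsStepIn (E : Finset (Sym2 V)) (z w : VSet G) : Prop :=
  z.1.1 ∈ E ∧ w.1.1 ∈ E ∧ zp G z = zm G w

lemma exists_reflTransGen_of_walk (hE : E ⊆ G.edgeFinset) {x y : V}
    (walk : (SimpleGraph.fromEdgeSet (↑E : Set (Sym2 V))).Walk x y) {z : VSet G}
    (hz : z.1.1 ∈ E) (hzx : zp G z = x) : ∃ w : VSet G, w.1.1 ∈ E ∧ zp G w = y ∧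
      Relation.ReflTransGen (IsStepIn E) z w := by
  induction walk generalizing z with
  | nil => exact ⟨z, hz, hzx, .refl⟩
  | cons hadj _ ih =>
    have hmem := ((SimpleGraph.fromEdgeSet_adj _).1 hadj).1
    obtain ⟨b, hbedge, hbm, hbp⟩ := exists_zm_eq_zp_eq_of_adj
      (G.mem_edgeSet.1 (SimpleGraph.mem_edgeFinset.1 (hE hmem)))
    have hb : b.1.1 ∈ E := hbedge ▸ hmem
    obtain ⟨w, hw, hwp, hreach⟩ := ih hb hbp
    exact ⟨w, hw, hwp, hreach.head ⟨hz, hb, hzx.trans hbm.symm⟩⟩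

lemma exists_reflTransGen_of_mem_scrS (hE : E ∈ scrS G v₁) {z : VSet G} (hz : z.1.1 ∈ E) {v : V}
    (hv : memVerts E v) : ∃ w : VSet G, w.1.1 ∈ E ∧ zp G w = v ∧
      Relation.ReflTransGen (IsStepIn E) z w := by
  obtain ⟨walk⟩ := hE.2.2 (zp G z) v ⟨_, hz, zp_mem z⟩ hv
  exact exists_reflTransGen_of_walk hE.1 walk hz rfl

lemma reflTransGen_of_mem_scrS (hE : E ∈ scrS G v₁) {z w : VSet G} (hz : z.1.1 ∈ E)
    (hw : w.1.1 ∈ E) :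
    Relation.ReflTransGen (IsStepIn E) z w := by
  obtain ⟨w', hw', hzp, hreach⟩ := exists_reflTransGen_of_mem_scrS hE hz ⟨_, hw, zm_mem w⟩
  exact hreach.tail ⟨hw', hw, hzp⟩

end ConnectedEdgeSets

section UniformCirculation

/-- The pair measure of the walk on the oriented edges over `E` that chooses the next oriented edge
uniformly, each oriented edge having mass one. It charges every admissible transition. -/
def uniformCirculation (E : Finset (Sym2 V)) (z w : VSet G) : ℝ :=
  if IsStepIn E z w then (outDegIn G E z : ℝ)⁻¹ else 0

variable {E : Finset (Sym2 V)}

lemma outDegIn_pos {z : VSet G} (hz : z.1.1 ∈ E) : 0 < outDegIn G E z :=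
  Finset.card_pos.2 ⟨reverse z, by simpa using! hz⟩

lemma uniformCirculation_nonneg (z w : VSet G) : 0 ≤ uniformCirculation E z w := by
  unfold uniformCirculation
  split_ifs <;> positivity

lemma uniformCirculation_pos_iff {z w : VSet G} :
    0 < uniformCirculation E z w ↔ IsStepIn E z w := by
  unfold uniformCirculation
  split_ifs with h
  · simpa only [h, iff_true] using inv_pos.2 (Nat.cast_pos.2 (outDegIn_pos h.1))
  · simpa using h

lemma rowSum_uniformCirculation (z : VSet G) :
    rowSum (uniformCirculation E) z = if z.1.1 ∈ E then 1 else 0 := by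
  unfold rowSum uniformCirculation IsStepIn
  split_ifs with hz
  · simp only [hz, true_and, ← Finset.sum_filter, Finset.sum_const, nsmul_eq_mul,
      and_comm (a := _ ∈ E)]
    exact mul_inv_cancel₀ (Nat.cast_ne_zero.2 (outDegIn_pos hz).ne')
  · simp [hz]

lemma uniformCirculation_reverse (z w : VSet G) :
    uniformCirculation E (reverse w) (reverse z) = uniformCirculation E z w := by
  have hstep : IsStepIn E (reverse w) (reverse z) ↔ IsStepIn E z w := by
    simp only [IsStepIn, zp_reverse, zm_reverse, eq_comm (a := zm G w)]
    exact and_left_comm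
  unfold uniformCirculation
  simp only [hstep]
  split_ifs with h
  · simp only [outDegIn, zp_reverse, h.2.2]
  · rfl

lemma sum_uniformCirculation_left (w : VSet G) :
    ∑ z, uniformCirculation E z w = if w.1.1 ∈ E then 1 else 0 := by
  have hreverse : Function.Involutive (reverse : VSet G → VSet G) := fun z => by simp [reverse]
  calc ∑ z, uniformCirculation E z w
      = ∑ z, uniformCirculation E (reverse w) (reverse z) := by
        simp only [uniformCirculation_reverse]
    _ = rowSum (uniformCirculation E) (reverse w) :=
      Equiv.sum_comp hreverse.toPerm (uniformCirculation E (reverse w))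
    _ = _ := rowSum_uniformCirculation (reverse w)

lemma isIrreducibleCirculation_uniformCirculation {v₁ : V} (hE : E ∈ scrS G v₁) :
    IsIrreducibleCirculation {z : VSet G | z.1.1 ∈ E} (uniformCirculation E) where
  nonneg := uniformCirculation_nonneg
  mem_of_pos _ _ h := ⟨(uniformCirculation_pos_iff.1 h).1, (uniformCirculation_pos_iff.1 h).2.1⟩
  balanced z := by rw [rowSum_uniformCirculation, sum_uniformCirculation_left]
  rowSum_pos z hz := by
    simp_all [rowSum_uniformCirculation]
  irreducible z hz w hw := by
    simp only [uniformCirculation_pos_iff]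
    exact reflTransGen_of_mem_scrS hE hz hw

end UniformCirculation

end LiftedGraph

/-!
### Steering the walk
-/

section Steering

/-- The pairs `(n, N)` such that `n` is large and `N / n` is close to `σ`. -/
def ratioFilter (σ : ℝ) : Filter (ℕ × ℕ) :=
  comap (fun p => (p.1, (p.2 : ℝ) / p.1)) (atTop ×ˢ 𝓝 σ)

section RatioFilter

variable {ι : Type*} {l : Filter ι} {σ τ : ℝ}

lemma tendsto_ratioFilter_iff {f : ι → ℕ × ℕ} : Tendsto f l (ratioFilter σ) ↔
    Tendsto (fun i => (f i).1) l atTop ∧ Tendsto (fun i => ((f i).2 : ℝ) / (f i).1) l (𝓝 σ) :=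
  tendsto_comap_iff.trans tendsto_prod_iff'

lemma tendsto_fst_ratioFilter (σ : ℝ) : Tendsto Prod.fst (ratioFilter σ) atTop :=
  (tendsto_ratioFilter_iff.1 tendsto_id).1

lemma tendsto_div_ratioFilter (σ : ℝ) :
    Tendsto (fun p : ℕ × ℕ => (p.2 : ℝ) / p.1) (ratioFilter σ) (𝓝 σ) :=
  (tendsto_ratioFilter_iff.1 tendsto_id).2

lemma tendsto_const_div_ratioFilter (σ a : ℝ) :
    Tendsto (fun p : ℕ × ℕ => a / p.1) (ratioFilter σ) (𝓝 0) :=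
  (tendsto_natCast_atTop_atTop.comp (tendsto_fst_ratioFilter σ)).const_div_atTop a

lemma eventually_fst_pos_ratioFilter (σ : ℝ) : ∀ᶠ p in ratioFilter σ, (0 : ℝ) < p.1 :=
  (tendsto_natCast_atTop_atTop.comp (tendsto_fst_ratioFilter σ)).eventually_gt_atTop 0

lemma tendsto_snd_ratioFilter (hσ : 0 < σ) : Tendsto Prod.snd (ratioFilter σ) atTop := by
  have hmul := (tendsto_div_ratioFilter σ).pos_mul_atTop hσ
    (tendsto_natCast_atTop_atTop (R := ℝ).comp (tendsto_fst_ratioFilter σ))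
  refine tendsto_natCast_atTop_iff.1 (hmul.congr' ?_)
  filter_upwards [eventually_fst_pos_ratioFilter σ] with p hp
  exact div_mul_cancel₀ _ hp.ne'

lemma tendsto_sub_ratioFilter {k : ℕ × ℕ → ℕ} (hτ : 0 < τ)
    (hk : Tendsto (fun p => (p.1, k p)) (ratioFilter (σ + τ)) (ratioFilter σ)) :
    (∀ᶠ p in ratioFilter (σ + τ), k p ≤ p.2) ∧
      Tendsto (fun p => (p.1, p.2 - k p)) (ratioFilter (σ + τ)) (ratioFilter τ) := by
  have hratio := (tendsto_ratioFilter_iff.1 hk).2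
  have hle : ∀ᶠ p in ratioFilter (σ + τ), k p ≤ p.2 := by
    filter_upwards [eventually_fst_pos_ratioFilter _,
      hratio.eventually_lt (tendsto_div_ratioFilter _) (lt_add_of_pos_right σ hτ)] with p hp hlt
    exact Nat.cast_le.1 ((div_lt_div_iff_of_pos_right hp).1 hlt).le
  refine ⟨hle, tendsto_ratioFilter_iff.2 ⟨tendsto_fst_ratioFilter _, ?_⟩⟩
  have hsub := (tendsto_div_ratioFilter (σ + τ)).sub hratio
  rw [add_sub_cancel_left] at hsub
  refine hsub.congr' ?_
  filter_upwards [hle] with p hp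
  rw [Nat.cast_sub hp, sub_div]

lemma tendsto_floor_ratioFilter (hσ : 0 ≤ σ) (τ : ℝ) :
    Tendsto (fun p : ℕ × ℕ => (p.1, ⌊σ * p.1⌋₊)) (ratioFilter τ) (ratioFilter σ) :=
  tendsto_ratioFilter_iff.2 ⟨tendsto_fst_ratioFilter τ,
    (tendsto_nat_floor_mul_div_atTop hσ).comp
      (tendsto_natCast_atTop_atTop.comp (tendsto_fst_ratioFilter τ))⟩

lemma eventually_exp_le_half_exp {T η ε : ℝ} (hT : 0 < T) (hηε : T * η < ε) (J : ℝ) :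
    ∀ᶠ p in ratioFilter T, Real.exp (-p.1 * (J + ε)) ≤ Real.exp (-p.2 * (J / T + η)) / 2 := by
  have hlim := ((tendsto_div_ratioFilter T).mul_const (J / T + η)).add
    (tendsto_const_div_ratioFilter T (Real.log 2))
  rw [mul_add, mul_div_cancel₀ _ hT.ne', add_zero] at hlim
  filter_upwards [eventually_fst_pos_ratioFilter T,
    hlim.eventually_le_const (add_lt_add_right hηε J)] with p hp hle
  rw [div_mul_eq_mul_div, ← add_div, div_le_iff₀ hp] at hle
  calc Real.exp (-p.1 * (J + ε)) ≤ Real.exp (-p.2 * (J / T + η) - Real.log 2) :=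
        Real.exp_le_exp.2 (by linarith)
    _ = Real.exp (-p.2 * (J / T + η)) / 2 := by rw [Real.exp_sub, Real.exp_log two_pos]

lemma eventually_dist_add_smul_add_le {X : Type*} [NormedAddCommGroup X] [NormedSpace ℝ X]
    {T η ε : ℝ} (hT : 0 < T) (hηε : T * η < ε) (a : X) :
    ∀ᶠ p in ratioFilter T, ∀ c : X,
      dist (c + (p.2 : ℝ) • T⁻¹ • a) (c + (p.1 : ℝ) • a) + η * p.2 ≤ ε * p.1 := by
  have hratio := tendsto_div_ratioFilter T
  have hlim := (((hratio.mul_const T⁻¹).sub_const 1).abs.mul_const ‖a‖).add (hratio.mul_const η)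
  rw [mul_inv_cancel₀ hT.ne', sub_self, abs_zero, zero_mul, zero_add] at hlim
  filter_upwards [eventually_fst_pos_ratioFilter T, hlim.eventually_le_const hηε] with p hp hle c
  have hsub : (p.2 : ℝ) • T⁻¹ • a - (p.1 : ℝ) • a =
      (p.1 * ((p.2 : ℝ) / p.1 * T⁻¹ - 1)) • a := by
    rw [smul_smul, ← sub_smul]
    field_simp
  rw [dist_add_left, dist_eq_norm, hsub, norm_smul, Real.norm_eq_abs, abs_mul, abs_of_pos hp]
  calc _ = p.1 * (|(p.2 : ℝ) / p.1 * T⁻¹ - 1| * ‖a‖ + (p.2 : ℝ) / p.1 * η) := by field_simp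
    _ ≤ p.1 * ε := mul_le_mul_of_nonneg_left hle hp.le
    _ = ε * p.1 := mul_comm _ _

end RatioFilter

universe u v

variable {A : Type u} {α : Type v} [Fintype A]

/-- The states whose labels and position belong to `B` and whose visit counts are within `r`
of `c`. -/
def countsNear (B : Set (Finset α × A)) (c : A → ℝ) (r : ℝ) : Set (Finset α × A × (A → ℝ)) :=
  {s | (s.1, s.2.1) ∈ B ∧ s.2.2 ∈ Metric.closedBall c r}

lemma countsNear_subset {B B' : Set (Finset α × A)} (hB : B ⊆ B') {c c' : A → ℝ} {r r' : ℝ}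
    (hr : dist c c' + r ≤ r') : countsNear B c r ⊆ countsNear B' c' r' := fun _ hs =>
  ⟨hB hs.1, Metric.closedBall_subset_closedBall' (by linarith) hs.2⟩

variable [DecidableEq A] [DecidableEq α]

/-- For large `n`, from each state in `D` the walk has probability at least `exp (-n (J + o(1)))` of
being in `B` after `σ n + o(n)` steps with its visit counts increased by `n a + o(n)`. -/
def Steers (ℓ : A → α) (K : Finset α → A → A → ℝ) (D B : Set (Finset α × A)) (σ : ℝ) (a : A → ℝ)
    (J : ℝ) : Prop :=
  ∀ ε > 0, ∀ᶠ p in ratioFilter σ, ∀ s ∈ D, ∀ c : A → ℝ,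
    Real.exp (-p.1 * (J + ε)) ≤
      (walkOp ℓ K ^ p.2) ((countsNear B (c + (p.1 : ℝ) • a) (ε * p.1)).indicator 1) (s.1, s.2, c)

/-- From `s`, the walk reaches `t` in a bounded time and with a probability bounded below,
whatever the visit counts. -/
def Reaches (ℓ : A → α) (K : Finset α → A → A → ℝ) (s t : Finset α × A) : Prop :=
  ∃ l : ℕ, ∃ κ > 0, ∀ c : A → ℝ, ∃ c', dist c' c ≤ l ∧ ∀ φ, 0 ≤ φ → ∀ m,
    κ * (walkOp ℓ K ^ m) φ (t.1, t.2, c') ≤ (walkOp ℓ K ^ (m + l)) φ (s.1, s.2, c)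

variable {ℓ : A → α} {K : Finset α → A → A → ℝ}

lemma indicator_one_nonneg {X : Type*} (S : Set X) : (0 : X → ℝ) ≤ S.indicator 1 :=
  Set.indicator_nonneg fun _ _ => zero_le_one

lemma walkOp_pow_indicator_mono (hK : ∀ F x y, 0 ≤ K F x y) {S T : Set (Finset α × A × (A → ℝ))}
    (hST : S ⊆ T) (n : ℕ) (s : Finset α × A × (A → ℝ)) :
    (walkOp ℓ K ^ n) (S.indicator 1) s ≤ (walkOp ℓ K ^ n) (T.indicator 1) s :=
  walkOp_pow_mono hK (Set.indicator_le_indicator_of_subset hST fun _ => zero_le_one) n s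

lemma Steers.of_tendsto {ι : Type*} {l : Filter ι} [l.NeBot] (hK : ∀ F x y, 0 ≤ K F x y)
    {D B : Set (Finset α × A)} {σ : ℝ} {a : ι → A → ℝ} {J : ι → ℝ} {a₀ : A → ℝ} {J₀ : ℝ}
    (h : ∀ᶠ i in l, Steers ℓ K D B σ (a i) (J i)) (ha : Tendsto a l (𝓝 a₀))
    (hJ : Tendsto J l (𝓝 J₀)) : Steers ℓ K D B σ a₀ J₀ := fun ε hε => by
  obtain ⟨i, hi, hdist, hJi⟩ := (h.and ((Metric.tendsto_nhds.1 ha _ (half_pos hε)).and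
    (hJ.eventually_lt_const (lt_add_of_pos_right J₀ (half_pos hε))))).exists
  filter_upwards [hi (ε / 2) (half_pos hε)] with p hp s hs c
  refine (Real.exp_le_exp.2 ?_).trans ((hp s hs c).trans
    (walkOp_pow_indicator_mono hK (countsNear_subset subset_rfl ?_) _ _))
  · rw [neg_mul, neg_mul, neg_le_neg_iff]
    exact mul_le_mul_of_nonneg_left (by linarith) p.1.cast_nonneg
  · rw [dist_add_left, dist_smul₀, Real.norm_natCast]
    nlinarith [mul_le_mul_of_nonneg_left hdist.le p.1.cast_nonneg]

lemma reaches_of_reflTransGen (hK : ∀ F x y, 0 ≤ K F x y) {s t : Finset α × A}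
    (h : Relation.ReflTransGen (fun s t => 0 < K s.1 s.2 t.2 ∧ t.1 = insert (ℓ t.2) s.1) s t) :
    Reaches ℓ K s t := by
  induction h using Relation.ReflTransGen.head_induction_on with
  | refl => exact ⟨0, 1, one_pos, fun c => ⟨c, by simp, fun φ _ m => by simp⟩⟩
  | @head s b hstep _ ih =>
    obtain ⟨l, κ, hκ, hreach⟩ := ih
    refine ⟨l + 1, K s.1 s.2 b.2 * κ, mul_pos hstep.1 hκ, fun c => ?_⟩
    obtain ⟨c', hdist, hweight⟩ := hreach (c + Pi.single b.2 1)
    refine ⟨c', ?_, fun φ hφ m => ?_⟩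
    · have hsingle : dist (c + Pi.single b.2 1) c = 1 := by simp [Pi.norm_single]
      push_cast
      linarith [dist_triangle c' (c + Pi.single b.2 1) c]
    · rw [mul_assoc]
      refine (mul_le_mul_of_nonneg_left (hweight φ hφ m) hstep.1.le).trans ?_
      rw [hstep.2]
      exact mul_walkOp_pow_le hK hφ (m + l) (s.1, s.2, c) b.2

lemma Steers.trans (hK : ∀ F x y, 0 ≤ K F x y) {D B B' : Set (Finset α × A)} {σ σ' : ℝ}
    {a a' : A → ℝ} {J J' : ℝ} (h : Steers ℓ K D B σ a J) (hσ : 0 ≤ σ)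
    (h' : Steers ℓ K B B' σ' a' J') (hσ' : 0 < σ') :
    Steers ℓ K D B' (σ + σ') (a + a') (J + J') := fun ε hε => by
  have hfloor := tendsto_floor_ratioFilter hσ (σ + σ')
  obtain ⟨hle, hsub⟩ := tendsto_sub_ratioFilter hσ' hfloor
  filter_upwards [hle, hfloor.eventually (h (ε / 2) (half_pos hε)),
    hsub.eventually (h' (ε / 2) (half_pos hε))] with p hle hfirst hsecond s hs c
  set φ : Finset α × A × (A → ℝ) → ℝ :=
    (countsNear B' (c + (p.1 : ℝ) • (a + a')) (ε * p.1)).indicator 1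
  have hnear : Real.exp (-p.1 * (J' + ε / 2)) •
      (countsNear B (c + (p.1 : ℝ) • a) (ε / 2 * p.1)).indicator 1 ≤
        (walkOp ℓ K ^ (p.2 - ⌊σ * p.1⌋₊)) φ := fun t => by
    by_cases ht : t ∈ countsNear B (c + (p.1 : ℝ) • a) (ε / 2 * p.1)
    · simp only [Pi.smul_apply, Set.indicator_of_mem ht, Pi.one_apply, smul_eq_mul, mul_one]
      refine (hsecond _ ht.1 t.2.2).trans (walkOp_pow_indicator_mono hK ?_ _ _)
      refine countsNear_subset subset_rfl ?_
      rw [smul_add, ← add_assoc, dist_add_right]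
      linarith [Metric.mem_closedBall.1 ht.2]
    · simp only [Pi.smul_apply, Set.indicator_of_notMem ht, smul_zero]
      simpa using walkOp_pow_mono hK (indicator_one_nonneg _) _ t
  calc Real.exp (-p.1 * (J + J' + ε))
      = Real.exp (-p.1 * (J' + ε / 2)) * Real.exp (-p.1 * (J + ε / 2)) := by
        rw [← Real.exp_add]
        ring_nf
    _ ≤ Real.exp (-p.1 * (J' + ε / 2)) * (walkOp ℓ K ^ ⌊σ * p.1⌋₊)
          ((countsNear B (c + (p.1 : ℝ) • a) (ε / 2 * p.1)).indicator 1) (s.1, s.2, c) :=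
        mul_le_mul_of_nonneg_left (hfirst s hs c) (Real.exp_pos _).le
    _ ≤ (walkOp ℓ K ^ ⌊σ * p.1⌋₊) ((walkOp ℓ K ^ (p.2 - ⌊σ * p.1⌋₊)) φ) (s.1, s.2, c) := by
        simpa using walkOp_pow_mono hK hnear ⌊σ * p.1⌋₊ (s.1, s.2, c)
    _ = (walkOp ℓ K ^ p.2) φ (s.1, s.2, c) := by
        rw [← Module.End.mul_apply, ← pow_add, Nat.add_sub_cancel' hle]

lemma Reaches.exp_mul_le_walkOp_pow (hK : ∀ F x y, 0 ≤ K F x y) {B B' : Set (Finset α × A)} {σ : ℝ}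
    {a : A → ℝ} {J : ℝ} {s t : Finset α × A} (hst : Reaches ℓ K s t) (ht : t ∈ B)
    (h : Steers ℓ K B B' σ a J) (hσ : 0 < σ) {ε : ℝ} (hε : 0 < ε) :
    ∀ᶠ p in ratioFilter σ, ∀ c : A → ℝ, Real.exp (-p.1 * (J + ε)) ≤
      (walkOp ℓ K ^ p.2) ((countsNear B' (c + (p.1 : ℝ) • a) (ε * p.1)).indicator 1)
        (s.1, s.2, c) := by
  obtain ⟨l, κ, hκ, hreach⟩ := hst
  have hshort : Tendsto (fun p : ℕ × ℕ => (p.1, l)) (ratioFilter (0 + σ)) (ratioFilter 0) :=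
    tendsto_ratioFilter_iff.2 ⟨tendsto_fst_ratioFilter _, tendsto_const_div_ratioFilter (0 + σ) l⟩
  obtain ⟨hle, hsub⟩ := tendsto_sub_ratioFilter hσ hshort
  rw [zero_add] at hle hsub
  filter_upwards [hle, hsub.eventually (h (ε / 2) (half_pos hε)), eventually_fst_pos_ratioFilter σ,
    (tendsto_const_div_ratioFilter σ l).eventually_le_const (half_pos hε),
    (tendsto_const_div_ratioFilter σ (-Real.log κ)).eventually_le_const (half_pos hε)]
    with p hle hsteer hp hl hlog c
  rw [div_le_iff₀ hp] at hl hlog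
  obtain ⟨c', hdist, hweight⟩ := hreach c
  set φ : Finset α × A × (A → ℝ) → ℝ :=
    (countsNear B' (c + (p.1 : ℝ) • a) (ε * p.1)).indicator 1
  calc Real.exp (-p.1 * (J + ε))
      ≤ Real.exp (Real.log κ + -p.1 * (J + ε / 2)) := Real.exp_le_exp.2 (by linarith)
    _ = κ * Real.exp (-p.1 * (J + ε / 2)) := by rw [Real.exp_add, Real.exp_log hκ]
    _ ≤ κ * (walkOp ℓ K ^ (p.2 - l)) φ (t.1, t.2, c') := by
        refine mul_le_mul_of_nonneg_left ((hsteer t ht c').trans ?_) hκ.le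
        refine walkOp_pow_indicator_mono hK (countsNear_subset subset_rfl ?_) _ _
        rw [dist_add_right]
        linarith
    _ ≤ (walkOp ℓ K ^ (p.2 - l + l)) φ (s.1, s.2, c) := hweight φ (indicator_one_nonneg _) _
    _ = (walkOp ℓ K ^ p.2) φ (s.1, s.2, c) := by rw [Nat.sub_add_cancel hle]

lemma Steers.of_reaches [Finite α] (hK : ∀ F x y, 0 ≤ K F x y) {D B B' : Set (Finset α × A)}
    {σ : ℝ} {a : A → ℝ} {J : ℝ} (hreach : ∀ s ∈ D, ∃ t ∈ B, Reaches ℓ K s t)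
    (h : Steers ℓ K B B' σ a J) (hσ : 0 < σ) : Steers ℓ K D B' σ a J := fun ε hε =>
  (Set.toFinite D).eventually_all.2 fun s hs => by
    obtain ⟨t, ht, hst⟩ := hreach s hs
    exact hst.exp_mul_le_walkOp_pow hK ht h hσ hε

/-- The states of a walk which has collected the labels in `E` and is at a point labelled in `E`. -/
def statesOver (ℓ : A → α) (E : Finset α) : Set (Finset α × A) :=
  {s | s.1 = E ∧ ℓ s.2 ∈ E}

lemma IsIrreducibleCirculation.steers {E : Finset α} {M : A → A → ℝ}
    (hM : IsIrreducibleCirculation {x | ℓ x ∈ E} M) (hpos : 0 < ∑ x, rowSum M x)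
    (hK : ∀ F x y, 0 ≤ K F x y) (hMK : ∀ x y, 0 < M x y → 0 < K E x y) :
    Steers ℓ K (statesOver ℓ E) (statesOver ℓ E) (∑ x, rowSum M x) (rowSum M)
      (pairEntropy (K E) M) := fun ε hε => by
  obtain ⟨η, hη, hηε⟩ : ∃ η > 0, (∑ x, rowSum M x) * η < ε :=
    ⟨ε / (2 * ∑ x, rowSum M x), by positivity, by field_simp; norm_num⟩
  filter_upwards [eventually_exp_le_half_exp hpos hηε (pairEntropy (K E) M),
    eventually_dist_add_smul_add_le hpos hηε (rowSum M),
    (tendsto_snd_ratioFilter hpos).eventually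
      (hM.eventually_exp_le_walkOp_pow hpos hK hMK (fun _ hx => hx) hη)]
    with p hexp hdist hwalk s hs c
  obtain ⟨E', x⟩ := s
  obtain ⟨rfl, hx⟩ := hs
  refine (hexp.trans (hwalk x hx c)).trans (walkOp_pow_indicator_mono hK ?_ _ _)
  exact fun t ht => ⟨⟨ht.1, ht.2.1⟩,
    Metric.closedBall_subset_closedBall' (by linarith [hdist c]) ht.2.2⟩

lemma steers_sum_Iic [Finite α] {b : ℕ} {E : Fin b → Finset α} {M : Fin b → A → A → ℝ}
    (hM : ∀ k, IsIrreducibleCirculation {x | ℓ x ∈ E k} (M k))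
    (hpos : ∀ k, 0 < ∑ x, rowSum (M k) x) (hK : ∀ F x y, 0 ≤ K F x y)
    (hMK : ∀ k x y, 0 < M k x y → 0 < K (E k) x y)
    (hreach : ∀ k l : Fin b, (k : ℕ) + 1 = l →
      ∀ s ∈ statesOver ℓ (E k), ∃ t ∈ statesOver ℓ (E l), Reaches ℓ K s t)
    {i : Fin b} (hi : (i : ℕ) = 0) (k : Fin b) :
    Steers ℓ K (statesOver ℓ (E i)) (statesOver ℓ (E k)) (∑ j ∈ Finset.Iic k, ∑ x, rowSum (M j) x)
      (∑ j ∈ Finset.Iic k, rowSum (M j)) (∑ j ∈ Finset.Iic k, pairEntropy (K (E j)) (M j)) := by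
  have hstage := fun k => (hM k).steers (hpos k) hK (hMK k)
  obtain ⟨k, hk⟩ := k
  induction k with
  | zero =>
    obtain rfl : i = ⟨0, hk⟩ := Fin.ext hi
    have hIic : Finset.Iic (⟨0, hk⟩ : Fin b) = {⟨0, hk⟩} := by
      ext j
      simp [Fin.le_def, Fin.ext_iff]
    simpa only [hIic, Finset.sum_singleton] using hstage _
  | succ k ih =>
    have hIic : Finset.Iic (⟨k + 1, hk⟩ : Fin b) =
        insert ⟨k + 1, hk⟩ (Finset.Iic ⟨k, (Nat.lt_succ_self k).trans hk⟩) := by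
      ext j
      simp only [Finset.mem_Iic, Finset.mem_insert, Fin.le_def, Fin.ext_iff]
      omega
    have hnot : (⟨k + 1, hk⟩ : Fin b) ∉ Finset.Iic ⟨k, (Nat.lt_succ_self k).trans hk⟩ := by
      simp [Fin.le_def]
    simp only [hIic, Finset.sum_insert hnot, add_comm _ (Finset.sum (Finset.Iic _) _)]
    exact (ih _).trans hK (Finset.sum_nonneg fun j _ => (hpos j).le)
      (.of_reaches hK (hreach _ _ rfl) (hstage _) (hpos _)) (hpos _)

end Steering

/-!
### The rate function as an infimum over staged flows
-/

section RelativeEntropy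

variable {A : Type} [Fintype A]

lemma rowSum_mul {q : A → A → ℝ} (hq : ∀ x, ∑ y, q x y = 1) (a : A → ℝ) :
    rowSum (fun x y => a x * q x y) = a := by
  funext x
  rw [rowSum, ← Finset.mul_sum, hq, mul_one]

lemma coe_sum_eq_sum_coe {ι : Type*} (s : Finset ι) (f : ι → ℝ) :
    ((∑ i ∈ s, f i : ℝ) : EReal) = ∑ i ∈ s, (f i : EReal) :=
  map_sum (⟨⟨Real.toEReal, EReal.coe_zero⟩, EReal.coe_add⟩ : ℝ →+ EReal) f s

lemma coe_mul_relEntInt {p q : A → A → ℝ} (hq : ∀ x, ∑ y, q x y = 1)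
    (hqp : ∀ x y, p x y = 0 → q x y = 0) (r : ℝ) (ν : A → ℝ) :
    (r : EReal) * relEntInt ν q p = (pairEntropy p fun x y => r * ν x * q x y : ℝ) := by
  have hrel (x : A) : (ν x : EReal) * relEnt (q x) (p x) =
      (ν x * ∑ y, q x y * Real.log (q x y / p x y) : ℝ) := by
    rw [relEnt, if_pos (hqp x), EReal.coe_mul]
  rw [relEntInt, Finset.sum_congr rfl fun x _ => hrel x, ← coe_sum_eq_sum_coe, ← EReal.coe_mul,
    pairEntropy_eq_sum (q := q) p fun x y => by rw [rowSum_mul hq fun x => r * ν x]]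
  simp only [Finset.mul_sum]
  refine congrArg _ (Finset.sum_congr rfl fun x _ => Finset.sum_congr rfl fun y _ => ?_)
  rcases eq_or_ne (q x y) 0 with h0 | hne
  · simp [h0]
  · rw [Real.log_div hne fun h => hne (hqp x y h)]
    ring

end RelativeEntropy

section StagedFlow

variable {V : Type} [Fintype V] [LinearOrder V] {G : SimpleGraph V} [DecidableRel G.Adj]

section FlowIn

variable {E : Finset (Sym2 V)} {M : VSet G → VSet G → ℝ}

/-- A nonnegative measure on the admissible transitions between the oriented edges over `E`, with
equal marginals. -/
structure IsFlowIn (E : Finset (Sym2 V)) (M : VSet G → VSet G → ℝ) : Prop where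
  nonneg : ∀ x y, 0 ≤ M x y
  isStepIn : ∀ x y, M x y ≠ 0 → IsStepIn E x y
  balanced : ∀ x, rowSum M x = ∑ y, M y x

lemma IsFlowIn.rowSum_nonneg (hM : IsFlowIn E M) (x : VSet G) : 0 ≤ rowSum M x :=
  Finset.sum_nonneg fun y _ => hM.nonneg x y

lemma IsFlowIn.mem_of_rowSum_ne_zero (hM : IsFlowIn E M) {x : VSet G} (hx : rowSum M x ≠ 0) :
    x.1.1 ∈ E := by
  obtain ⟨y, -, hy⟩ := Finset.exists_ne_zero_of_sum_ne_zero hx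
  exact (hM.isStepIn x y hy).1

lemma IsFlowIn.eq_zero (hM : IsFlowIn E M) (hmass : ∑ x, rowSum M x = 0) : M = 0 := by
  funext x y
  have hrow := (Finset.sum_eq_zero_iff_of_nonneg fun x _ => hM.rowSum_nonneg x).1 hmass x
    (Finset.mem_univ x)
  exact (Finset.sum_eq_zero_iff_of_nonneg fun y _ => hM.nonneg x y).1 hrow y (Finset.mem_univ y)

lemma isFlowIn_uniformCirculation (E : Finset (Sym2 V)) :
    IsFlowIn (G := G) E (uniformCirculation E) where
  nonneg := uniformCirculation_nonneg
  isStepIn x y h := uniformCirculation_pos_iff.1 ((uniformCirculation_nonneg x y).lt_of_ne' h)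
  balanced x := by rw [rowSum_uniformCirculation, sum_uniformCirculation_left]

lemma sum_rowSum_uniformCirculation_pos (hE : E ⊆ G.edgeFinset) (hne : E.Nonempty) :
    0 < ∑ x : VSet G, rowSum (uniformCirculation E) x := by
  obtain ⟨e, he⟩ := hne
  refine Finset.sum_pos' (fun x _ => (isFlowIn_uniformCirculation E).rowSum_nonneg x)
    ⟨(⟨e, hE he⟩, true), Finset.mem_univ _, ?_⟩
  simp [rowSum_uniformCirculation, he]

lemma IsFlowIn.isIrreducibleCirculation_add (hM : IsFlowIn E M) {v₁ : V} (hE : E ∈ scrS G v₁)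
    {a b : ℝ} (ha : 0 ≤ a) (hb : 0 < b) :
    IsIrreducibleCirculation {x : VSet G | x.1.1 ∈ E} (a • M + b • uniformCirculation E) := by
  have hU := isIrreducibleCirculation_uniformCirculation hE
  have hle (x y : VSet G) :
      b * uniformCirculation E x y ≤ a * M x y + b * uniformCirculation E x y :=
    le_add_of_nonneg_left (mul_nonneg ha (hM.nonneg x y))
  refine ⟨fun x y => (mul_nonneg hb.le (hU.nonneg x y)).trans (hle x y), fun x y hxy => ?_,
    fun x => ?_, fun x hx => ?_, fun x hx y hy => Relation.ReflTransGen.mono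
      (fun u w huw => (mul_pos hb huw).trans_le (hle u w)) _ _
      (hU.irreducible x hx y hy)⟩
  · rcases eq_or_ne (M x y) 0 with h0 | hne
    · refine hU.mem_of_pos x y (pos_of_mul_pos_right ?_ hb.le)
      simpa [h0] using hxy
    · exact ⟨(hM.isStepIn x y hne).1, (hM.isStepIn x y hne).2.1⟩
  · have hM' := hM.balanced x
    have hU' := hU.balanced x
    simp only [rowSum] at hM' hU' ⊢
    simp [Finset.sum_add_distrib, ← Finset.mul_sum, hM', hU']
  · exact (mul_pos hb (hU.rowSum_pos x hx)).trans_le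
      ((Finset.mul_sum _ _ _).trans_le (Finset.sum_le_sum fun y _ => hle x y))

lemma isFlowIn_mul {r : ℝ} (hr : 0 ≤ r) {μ : VSet G → ℝ} (hμ : ∀ x, 0 ≤ μ x)
    (hsupp : ∀ x, μ x ≠ 0 → x.1.1 ∈ E) {q : VSet G → VSet G → ℝ} (hq : q ∈ TS G)
    (hinv : Invariant μ q) : IsFlowIn E fun x y => r * μ x * q x y where
  nonneg x y := mul_nonneg (mul_nonneg hr (hμ x)) (hq.1 x y)
  isStepIn x y h := by
    have hx : μ x ≠ 0 := right_ne_zero_of_mul (left_ne_zero_of_mul h)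
    have hxy : q x y ≠ 0 := right_ne_zero_of_mul h
    have hy : 0 < μ y := by
      rw [← hinv y]
      exact Finset.sum_pos' (fun u _ => mul_nonneg (hμ u) (hq.1 u y)) ⟨x, Finset.mem_univ x,
        mul_pos ((hμ x).lt_of_ne' hx) ((hq.1 x y).lt_of_ne' hxy)⟩
    exact ⟨hsupp x hx, hsupp y hy.ne', hq.2.2 x y hxy⟩
  balanced y := by
    rw [rowSum_mul hq.2.1 fun x => r * μ x]
    simp only [mul_assoc, ← Finset.mul_sum, hinv y]

lemma IsFlowIn.exists_eq_mul_of_pos (hM : IsFlowIn E M) (hmass : 0 < ∑ x, rowSum M x) :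
    ∃ μ : ProbMeas (VSet G), ∃ q ∈ TS G, (∀ x, μ.1 x ≠ 0 → x.1.1 ∈ E) ∧ Invariant μ.1 q ∧
      ∀ x y, M x y = (∑ x, rowSum M x) * μ.1 x * q x y := by
  let μ : ProbMeas (VSet G) := ⟨fun x => rowSum M x / ∑ x, rowSum M x,
    fun x => div_nonneg (hM.rowSum_nonneg x) hmass.le, by rw [← Finset.sum_div, div_self hmass.ne']⟩
  let q (x y : VSet G) : ℝ := if rowSum M x = 0 then pS G 1 ∅ x y else M x y / rowSum M x
  have hmul (x y : VSet G) : rowSum M x * q x y = M x y := by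
    simp only [q]
    split_ifs with h0
    · rw [eq_rowSum_mul_div hM.nonneg, h0, zero_mul, zero_mul]
    · exact mul_div_cancel₀ _ h0
  refine ⟨μ, q, ⟨fun x y => ?_, fun x => ?_, fun x y hxy => ?_⟩, fun x hx => ?_, fun y => ?_,
    fun x y => ?_⟩
  · simp only [q]
    split_ifs
    exacts [pS_nonneg one_pos _ _ _, div_nonneg (hM.nonneg x y) (hM.rowSum_nonneg x)]
  · simp only [q]
    split_ifs with h0
    exacts [sum_pS one_pos ∅ x, (Finset.sum_div _ _ _).symm.trans (div_self h0)]
  · simp only [q] at hxy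
    split_ifs at hxy
    exacts [(pS_ne_zero_iff one_pos).1 hxy, (hM.isStepIn x y (div_ne_zero_iff.1 hxy).1).2.2]
  · exact hM.mem_of_rowSum_ne_zero (div_ne_zero_iff.1 hx).1
  · simp only [μ, div_mul_eq_mul_div, hmul, ← Finset.sum_div, ← hM.balanced]
  · rw [mul_div_cancel₀ _ hmass.ne', hmul]

lemma IsFlowIn.exists_eq_mul (hM : IsFlowIn E M) (hE : E ⊆ G.edgeFinset) (hne : E.Nonempty) :
    ∃ μ : ProbMeas (VSet G), ∃ q ∈ TS G, (∀ x, μ.1 x ≠ 0 → x.1.1 ∈ E) ∧ Invariant μ.1 q ∧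
      ∀ x y, M x y = (∑ x, rowSum M x) * μ.1 x * q x y := by
  rcases (Finset.sum_nonneg fun x _ => hM.rowSum_nonneg x).eq_or_lt' with h0 | hpos
  · obtain ⟨μ, q, hq, hsupp, hinv, -⟩ := (isFlowIn_uniformCirculation E).exists_eq_mul_of_pos
      (sum_rowSum_uniformCirculation_pos hE hne)
    exact ⟨μ, q, hq, hsupp, hinv, fun x y => by rw [h0, hM.eq_zero h0]; simp⟩
  · exact hM.exists_eq_mul_of_pos hpos

end FlowIn

section SeqE

variable {v₁ : V} {Es : Fin G.edgeFinset.card → Finset (Sym2 V)}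

lemma exists_insert_of_mem_seqE (hEs : Es ∈ seqE G v₁) {k l : Fin G.edgeFinset.card}
    (hkl : (k : ℕ) + 1 = l) :
    ∃ e ∈ G.edgeFinset, ∃ e' ∈ Es k, edgeAdj e e' ∧ Es l = insert e (Es k) := by
  obtain ⟨hsub, hcard, hssub, -, hadj⟩ := hEs
  obtain ⟨e, he, hins⟩ := Finset.ssubset_iff.1 (hssub k l hkl)
  have hel : e ∈ Es l := hins (Finset.mem_insert_self _ _)
  obtain ⟨e', he', hee'⟩ := hadj k l hkl e (Finset.mem_sdiff.2 ⟨hel, he⟩)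
  refine ⟨e, hsub l hel, e', he', hee', (Finset.eq_of_subset_of_card_le hins ?_).symm⟩
  rw [Finset.card_insert_of_notMem he, hcard, hcard, hkl]

lemma mem_scrS_of_mem_seqE (hEs : Es ∈ seqE G v₁) (k : Fin G.edgeFinset.card) :
    Es k ∈ scrS G v₁ := by
  obtain ⟨k, hk⟩ := k
  induction k with
  | zero =>
    obtain ⟨e, heq⟩ := Finset.card_eq_one.1 (hEs.2.1 ⟨0, hk⟩)
    have hsub := hEs.1 ⟨0, hk⟩
    obtain ⟨e', he', hv⟩ := hEs.2.2.2.1 ⟨0, hk⟩ rfl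
    rw [heq] at he' hsub ⊢
    obtain rfl := Finset.mem_singleton.1 he'
    exact singleton_mem_scrS (hsub he') hv
  | succ k ih =>
    obtain ⟨e, he, e', he', hadj, heq⟩ :=
      exists_insert_of_mem_seqE hEs (k := ⟨k, (Nat.lt_succ_self k).trans hk⟩) (l := ⟨k + 1, hk⟩) rfl
    rw [heq]
    exact insert_mem_scrS (ih _) he he' hadj

lemma nonempty_of_mem_seqE (hEs : Es ∈ seqE G v₁) (k : Fin G.edgeFinset.card) : (Es k).Nonempty :=
  Finset.card_pos.1 (by simp [hEs.2.1 k])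

lemma monotone_of_mem_seqE (hEs : Es ∈ seqE G v₁) : Monotone Es := by
  rintro ⟨k, hk⟩ ⟨l, hl⟩ hkl
  replace hkl : k ≤ l := hkl
  induction l, hkl using Nat.le_induction with
  | base => exact le_rfl
  | succ l _ ih =>
    have hl' := (Nat.lt_succ_self l).trans hl
    exact (ih hl').trans (hEs.2.2.1 ⟨l, hl'⟩ ⟨l + 1, hl⟩ rfl).le

end SeqE

variable {v₁ : V} {δ : ℝ} {S0 : Set (Finset (Sym2 V))} {z : VSet G}
  {Es : Fin G.edgeFinset.card → Finset (Sym2 V)} {M : Fin G.edgeFinset.card → VSet G → VSet G → ℝ}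

/-- The competitors in the definition of `Λ^z`, described by the pair measures
`M_k(x, y) = r_k μ_k(x) q_k(x, y)`. -/
structure IsStagedFlow (v₁ : V) (S0 : Set (Finset (Sym2 V))) (z : VSet G)
    (Es : Fin G.edgeFinset.card → Finset (Sym2 V))
    (M : Fin G.edgeFinset.card → VSet G → VSet G → ℝ) : Prop where
  mem_seqE : Es ∈ seqE G v₁
  start : ∀ k : Fin G.edgeFinset.card, (k : ℕ) = 0 → Es k = {z.1.1}
  isFlowIn : ∀ k, IsFlowIn (Es k) (M k)
  eq_zero : ∀ k, Es k ∉ S0 → M k = 0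
  sum_eq_one : ∑ k, ∑ x, rowSum (M k) x = 1

/-- The cost `∑ r_k ∫ R(q_k‖p_{E_k}) dμ_k` of a staged flow. -/
def flowCost (δ : ℝ) (Es : Fin G.edgeFinset.card → Finset (Sym2 V))
    (M : Fin G.edgeFinset.card → VSet G → VSet G → ℝ) : ℝ :=
  ∑ k, pairEntropy (pS G δ (Es k)) (M k)

namespace IsStagedFlow

/-- The measure `μ = ∑ r_k μ_k` decomposed by a staged flow. -/
def marginal (hM : IsStagedFlow v₁ S0 z Es M) : ProbMeas (VSet G) :=
  ⟨fun x => ∑ k, rowSum (M k) x,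
    fun x => Finset.sum_nonneg fun k _ => (hM.isFlowIn k).rowSum_nonneg x,
    by rw [Finset.sum_comm, hM.sum_eq_one]⟩

lemma exists_last (hM : IsStagedFlow v₁ S0 z Es M) : ∃ k, Es k ∈ S0 ∧ ∀ j, k < j → M j = 0 := by
  obtain ⟨i, -, hi⟩ := Finset.exists_ne_zero_of_sum_ne_zero (hM.sum_eq_one.trans_ne one_ne_zero)
  have hiS0 : Es i ∈ S0 := by_contra fun h => hi (by simp [hM.eq_zero i h, rowSum])
  obtain ⟨k, -, hk⟩ := (Set.toFinite {j | Es j ∈ S0}).exists_le_maximal hiS0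
  exact ⟨k, hk.prop, fun j hj => hM.eq_zero j fun hjS0 => hk.not_gt hjS0 hj⟩

lemma marginal_mem_CC (hM : IsStagedFlow v₁ S0 z Es M) : hM.marginal ∈ CC G S0 := by
  obtain ⟨k, hk, hlast⟩ := hM.exists_last
  refine ⟨Es k, hk, fun x (hx : ∑ j, rowSum (M j) x ≠ 0) => ?_⟩
  obtain ⟨j, -, hj⟩ := Finset.exists_ne_zero_of_sum_ne_zero hx
  have hjk : j ≤ k := not_lt.1 fun hlt => hj (by simp [hlast j hlt, rowSum])
  exact monotone_of_mem_seqE hM.mem_seqE hjk ((hM.isFlowIn j).mem_of_rowSum_ne_zero hj)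

lemma LamZ_marginal_le (hδ : 0 < δ) (hM : IsStagedFlow v₁ S0 z Es M) :
    LamZ G v₁ δ S0 z hM.marginal ≤ (flowCost δ Es M : ℝ) := by
  choose μ q hq hsupp hinv hmul using fun k => (hM.isFlowIn k).exists_eq_mul (hM.mem_seqE.1 k)
    (nonempty_of_mem_seqE hM.mem_seqE k)
  refine sInf_le ⟨μ, fun k => ∑ x, rowSum (M k) x, Es, q, hM.mem_seqE, hM.start,
    fun k => Finset.sum_nonneg fun x _ => (hM.isFlowIn k).rowSum_nonneg x, fun k hk => ?_,
    hM.sum_eq_one, hsupp, fun x => ?_, hq, hinv, ?_⟩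
  · simp [hM.eq_zero k hk, rowSum]
  · refine Finset.sum_congr rfl fun k _ => ?_
    rw [rowSum, Finset.sum_congr rfl fun y _ => hmul k x y, ← Finset.mul_sum, (hq k).2.1, mul_one]
  · rw [flowCost, coe_sum_eq_sum_coe]
    refine Finset.sum_congr rfl fun k _ => ?_
    rw [coe_mul_relEntInt (hq k).2.1 (eq_zero_of_pS_eq_zero hδ (hq k))]
    exact congrArg (fun N => (pairEntropy (pS G δ (Es k)) N : EReal)) (funext₂ (hmul k))

end IsStagedFlow

lemma exists_isStagedFlow_of_LamZ_lt (hδ : 0 < δ) {μ : ProbMeas (VSet G)} {a : ℝ}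
    (ha : LamZ G v₁ δ S0 z μ < a) :
    ∃ Es M, ∃ hM : IsStagedFlow v₁ S0 z Es M, hM.marginal = μ ∧ flowCost δ Es M < a := by
  obtain ⟨_, ⟨μs, r, Es, q, hEs, hstart, hr, hrS0, hsum, hsupp, hμ, hq, hinv, rfl⟩, hlt⟩ :=
    sInf_lt_iff.1 ha
  simp only [coe_mul_relEntInt (hq _).2.1 (eq_zero_of_pS_eq_zero hδ (hq _)), ← coe_sum_eq_sum_coe,
    EReal.coe_lt_coe_iff] at hlt
  have hrow (k : Fin G.edgeFinset.card) := rowSum_mul (hq k).2.1 fun x => r k * (μs k).1 x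
  refine ⟨Es, fun k x y => r k * (μs k).1 x * q k x y, ⟨hEs, hstart,
    fun k => isFlowIn_mul (hr k) (μs k).2.1 (hsupp k) (hq k) (hinv k), fun k hk => ?_, ?_⟩, ?_, hlt⟩
  · funext x y
    simp [hrS0 k hk]
  · simp only [hrow, ← Finset.mul_sum, (μs _).2.2, mul_one, hsum]
  · refine Subtype.ext (funext fun x => ?_)
    simp only [IsStagedFlow.marginal, hrow, hμ]

end StagedFlow

/-!
### The upper bound
-/

lemma sum_Iic_eq_sum {ι X : Type*} [Fintype ι] [LinearOrder ι] [LocallyFiniteOrderBot ι]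
    [AddCommMonoid X] {k : ι} (f : ι → X) (hf : ∀ j, k < j → f j = 0) :
    ∑ j ∈ Finset.Iic k, f j = ∑ j, f j :=
  Finset.sum_subset (Finset.subset_univ _) fun j _ hj => hf j (by simpa using hj)

section UpperBound

variable {V : Type} [Fintype V] [LinearOrder V] {G : SimpleGraph V} [DecidableRel G.Adj]
  {δ : ℝ} {z : VSet G} {S0 : Set (Finset (Sym2 V))} {h : ProbMeas (VSet G) → ℝ} {n : ℕ}

/-- The label of the walk on oriented edges: forgetting the orientation. -/
abbrev unoriented (x : VSet G) : Sym2 V := x.1.1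

lemma coe_empMeas {A : Type} [Fintype A] [DecidableEq A] (g : Fin (n + 1) → A) :
    (empMeas n g).1 = ((n : ℝ) + 1)⁻¹ • visitCount g := by
  funext x
  simp [empMeas, visitCount, Pi.single_apply, Finset.sum_apply, div_eq_inv_mul, eq_comm (a := x)]

lemma empMeas_mem_CC_iff {g : Fin (n + 1) → VSet G} :
    empMeas n g ∈ CC G S0 ↔ ∃ F ∈ S0, visited unoriented g (Fin.last n) ⊆ F := by
  have hne (x : VSet G) : (empMeas n g).1 x ≠ 0 ↔ ∃ i, g i = x := by
    have hn : (n : ℝ) + 1 ≠ 0 := by positivity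
    simp [empMeas, hn, Finset.filter_eq_empty_iff]
  simp only [CC, Set.mem_ofPred_eq, hne, Finset.subset_iff, mem_visited, Fin.le_last, true_and]
  aesop

variable (G S0 z n) in
/-- The paths contributing to the restricted Laplace functional. -/
def restrictedPaths : Finset (Fin (n + 1) → VSet G) :=
  {g | g 0 = z ∧ empMeas n g ∈ CC G S0}

variable (G δ z S0 h n) in
/-- `E_z[exp(-(n+1) h(ℒ^{n+1})) 1_{ℒ^{n+1} ∈ 𝒞(𝒮₀)}]`. -/
def laplaceSum : ℝ :=
  ∑ g ∈ restrictedPaths G z S0 n,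
    Real.exp (-((n : ℝ) + 1) * h (empMeas n g)) * pathWeight unoriented (pS G δ) g

lemma sum_ite_liftTraj (f : (Fin (n + 1) → VSet G) → ℝ) :
    (∑ g : Fin (n + 1) → VSet G,
      if empMeas n g ∈ CC G S0 then f g * liftTraj G δ z n g else 0) =
      ∑ g ∈ restrictedPaths G z S0 n, f g * pathWeight unoriented (pS G δ) g := by
  rw [restrictedPaths, Finset.sum_filter]
  refine Finset.sum_congr rfl fun g _ => ?_
  by_cases hg : empMeas n g ∈ CC G S0 <;> by_cases h0 : g 0 = z <;>
    simp [hg, h0, liftTraj, pathWeight, visited]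

lemma Wres_lt_iff (hδ : 0 < δ) {a : ℝ} :
    Wres G δ z S0 h n < a ↔ Real.exp (-((n : ℝ) + 1) * a) < laplaceSum G δ z S0 h n := by
  have hweight (g : Fin (n + 1) → VSet G) : 0 ≤ pathWeight unoriented (pS G δ) g :=
    pathWeight_nonneg (pS_nonneg hδ) g
  have hprob := sum_ite_liftTraj (G := G) (δ := δ) (z := z) (S0 := S0) (n := n) 1
  have hpos : 0 < ∑ g ∈ restrictedPaths G z S0 n, 1 * pathWeight unoriented (pS G δ) g ↔
      0 < laplaceSum G δ z S0 h n := by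
    rw [laplaceSum, Finset.sum_pos_iff_of_nonneg fun g _ => by simpa using hweight g,
      Finset.sum_pos_iff_of_nonneg fun g _ => mul_nonneg (Real.exp_pos _).le (hweight g)]
    simp [Real.exp_pos]
  simp only [Pi.one_apply, one_mul] at hprob hpos
  rw [Wres, hprob, sum_ite_liftTraj fun g => Real.exp (-((n : ℝ) + 1) * h (empMeas n g))]
  simp only [hpos]
  split_ifs with hL
  · have hn : (0 : ℝ) < n + 1 := by positivity
    rw [EReal.coe_lt_coe_iff, ← laplaceSum, ← Real.lt_log_iff_exp_lt hL, neg_lt, ← div_eq_inv_mul,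
      lt_div_iff₀ hn, neg_mul, neg_mul, mul_comm a]
  · simpa using (not_lt.1 hL).trans (Real.exp_pos _).le

lemma exp_mul_walkOp_pow_le_laplaceSum (hδ : 0 < δ)
    {S : Set (Finset (Sym2 V) × VSet G × (VSet G → ℝ))}
    {a : ℝ} (hS : ∀ g : Fin (n + 1) → VSet G,
      (visited unoriented g (Fin.last n), g (Fin.last n), visitCount g) ∈ S →
        empMeas n g ∈ CC G S0 ∧ h (empMeas n g) ≤ a) :
    Real.exp (-((n : ℝ) + 1) * a) *
      (walkOp unoriented (pS G δ) ^ n) (S.indicator 1) ({unoriented z}, z, Pi.single z 1) ≤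
      laplaceSum G δ z S0 h n := by
  rw [← sum_pathWeight_mul, laplaceSum, Finset.mul_sum, restrictedPaths, ← Finset.filter_filter,
    Finset.sum_filter fun g => empMeas n g ∈ CC G S0]
  refine Finset.sum_le_sum fun g _ => ?_
  have hweight : 0 ≤ pathWeight unoriented (pS G δ) g := pathWeight_nonneg (pS_nonneg hδ) g
  by_cases hg : (visited unoriented g (Fin.last n), g (Fin.last n), visitCount g) ∈ S
  · rw [Set.indicator_of_mem hg, if_pos (hS g hg).1, Pi.one_apply, mul_one, neg_mul, neg_mul]
    gcongr
    exact (hS g hg).2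
  · rw [Set.indicator_of_notMem hg, mul_zero, mul_zero]
    split_ifs <;> positivity

lemma dist_empMeas_le {c : VSet G → ℝ} {r : ℝ} {μ : ProbMeas (VSet G)} {g : Fin (n + 1) → VSet G}
    (hg : dist (visitCount g) (c + ((n : ℝ) + 1) • μ.1) ≤ r * ((n : ℝ) + 1)) :
    dist (empMeas n g) μ ≤ r + ‖c‖ / ((n : ℝ) + 1) := by
  have hn : (0 : ℝ) < n + 1 := by positivity
  have hscale : (empMeas n g).1 - μ.1 = ((n : ℝ) + 1)⁻¹ •
      ((visitCount g - (c + ((n : ℝ) + 1) • μ.1)) + c) := by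
    rw [coe_empMeas, sub_add_eq_sub_sub, sub_right_comm, sub_add_cancel, smul_sub,
      inv_smul_smul₀ hn.ne']
  rw [Subtype.dist_eq, dist_eq_norm, hscale, norm_smul, Real.norm_of_nonneg (by positivity),
    inv_mul_le_iff₀ hn, mul_add, mul_div_cancel₀ _ hn.ne', mul_comm _ r]
  exact (norm_add_le _ _).trans (by simpa [dist_eq_norm] using hg)

lemma eventually_Wres_lt_of_steers (hδ : 0 < δ) (hh : Continuous h) {E : Finset (Sym2 V)}
    (hE : E ∈ S0) {μ : ProbMeas (VSet G)} {J : ℝ}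
    (hsteers : Steers unoriented (pS G δ) (statesOver unoriented {unoriented z})
      (statesOver unoriented E) 1 μ.1 J) {a : ℝ} (ha : J + h μ < a) :
    ∀ᶠ n in atTop, Wres G δ z S0 h n < a := by
  obtain ⟨ε, hε, hεa⟩ : ∃ ε > 0, J + ε + (h μ + ε) < a :=
    ⟨(a - (J + h μ)) / 3, by linarith, by linarith⟩
  obtain ⟨r, hr, hball⟩ := Metric.eventually_nhds_iff.1
    ((hh.tendsto μ).eventually_lt_const (lt_add_of_pos_right (h μ) hε))
  have hratio : Tendsto (fun n : ℕ => (n + 1, n)) atTop (ratioFilter 1) :=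
    tendsto_ratioFilter_iff.2 ⟨tendsto_add_atTop_nat 1, by
      simpa using tendsto_natCast_div_add_atTop (1 : ℝ)⟩
  filter_upwards [hratio.eventually (hsteers (min ε (r / 2)) (lt_min hε (half_pos hr))),
    (tendsto_div_natCast_add_one tendsto_id ‖(Pi.single z 1 : VSet G → ℝ)‖).eventually_lt_const
      (half_pos hr)] with n hwalk hsmall
  have hn : (0 : ℝ) < n + 1 := by positivity
  have hlower := exp_mul_walkOp_pow_le_laplaceSum (z := z) (S0 := S0) (h := h) (n := n) hδ
    (a := h μ + ε) (S := countsNear (statesOver unoriented E)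
      (Pi.single z 1 + ((n : ℝ) + 1) • μ.1) (min ε (r / 2) * ((n : ℝ) + 1))) fun g hg =>
    ⟨empMeas_mem_CC_iff.2 ⟨E, hE, hg.1.1.le⟩, (hball ((dist_empMeas_le hg.2).trans_lt
      ((add_lt_add_of_le_of_lt (min_le_right _ _) hsmall).trans_eq (add_halves r)))).le⟩
  have hwalk' := hwalk ({unoriented z}, z) ⟨rfl, Finset.mem_singleton_self _⟩ (Pi.single z 1)
  push_cast at hwalk'
  refine (Wres_lt_iff hδ).2 (lt_of_lt_of_le ?_
    ((mul_le_mul_of_nonneg_left hwalk' (Real.exp_pos _).le).trans hlower))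
  rw [← Real.exp_add, Real.exp_lt_exp, ← mul_add, neg_mul, neg_mul, neg_lt_neg_iff]
  exact mul_lt_mul_of_pos_left (by linarith [min_le_left ε (r / 2)]) hn

lemma exists_reaches_of_mem_seqE (hδ : 0 < δ) {v₁ : V}
    {Es : Fin G.edgeFinset.card → Finset (Sym2 V)} (hEs : Es ∈ seqE G v₁)
    {k l : Fin G.edgeFinset.card} (hkl : (k : ℕ) + 1 = l) {s : Finset (Sym2 V) × VSet G}
    (hs : s ∈ statesOver unoriented (Es k)) :
    ∃ t ∈ statesOver unoriented (Es l), Reaches unoriented (pS G δ) s t := by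
  obtain ⟨F, x⟩ := s
  obtain ⟨rfl, hx⟩ := hs
  obtain ⟨e, he, e', he', ⟨v, hve, hve'⟩, hins⟩ := exists_insert_of_mem_seqE hEs hkl
  obtain ⟨y, -, hyv, hxy⟩ :=
    exists_reflTransGen_of_mem_scrS (mem_scrS_of_mem_seqE hEs k) hx ⟨e', he', hve'⟩
  obtain ⟨w, hwe, hwv⟩ := exists_zm_eq_of_mem he hve
  refine ⟨(Es l, w), ⟨rfl, ?_⟩, reaches_of_reflTransGen (pS_nonneg hδ)
    (.tail (hxy.lift (fun x => (Es k, x)) fun a b hab => ?_) ⟨?_, ?_⟩)⟩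
  · simp [unoriented, hwe, hins]
  · exact ⟨pS_pos hδ _ hab.2.2, (Finset.insert_eq_of_mem hab.2.1).symm⟩
  · exact pS_pos hδ _ (hyv.trans hwv.symm)
  · simp only [unoriented, hwe, hins]

section StagedFlow

variable {v₁ : V} {Es : Fin G.edgeFinset.card → Finset (Sym2 V)}
  {M : Fin G.edgeFinset.card → VSet G → VSet G → ℝ} {k : Fin G.edgeFinset.card} {η : ℝ}

/-- The mixture of a staged flow stopped at the stage `k` with the uniform circulations of the
stages up to `k`, normalised so as to have total mass `1`. -/
def mixedFlow (Es : Fin G.edgeFinset.card → Finset (Sym2 V))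
    (M : Fin G.edgeFinset.card → VSet G → VSet G → ℝ) (k : Fin G.edgeFinset.card) (η : ℝ)
    (j : Fin G.edgeFinset.card) : VSet G → VSet G → ℝ :=
  (1 - η) • M j + (η / ∑ i ∈ Finset.Iic k, ∑ x, rowSum (uniformCirculation (G := G) (Es i)) x) •
    uniformCirculation (Es j)

lemma mixedFlow_zero : mixedFlow Es M k 0 = M := by
  funext j
  simp [mixedFlow]

lemma continuous_mixedFlow (j : Fin G.edgeFinset.card) :
    Continuous fun η => mixedFlow Es M k η j := by
  unfold mixedFlow
  fun_prop

namespace IsStagedFlow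

lemma uniformMass_pos (hM : IsStagedFlow v₁ S0 z Es M) (k : Fin G.edgeFinset.card) :
    0 < ∑ i ∈ Finset.Iic k, ∑ x, rowSum (uniformCirculation (G := G) (Es i)) x :=
  Finset.sum_pos (fun i _ => sum_rowSum_uniformCirculation_pos (hM.mem_seqE.1 i)
    (nonempty_of_mem_seqE hM.mem_seqE i)) ⟨k, Finset.mem_Iic.2 le_rfl⟩

lemma isIrreducibleCirculation_mixedFlow (hM : IsStagedFlow v₁ S0 z Es M) (hη : 0 < η)
    (hη1 : η < 1) (k j : Fin G.edgeFinset.card) :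
    IsIrreducibleCirculation {x : VSet G | x.1.1 ∈ Es j} (mixedFlow Es M k η j) :=
  (hM.isFlowIn j).isIrreducibleCirculation_add (mem_scrS_of_mem_seqE hM.mem_seqE j)
    (sub_nonneg.2 hη1.le) (div_pos hη (hM.uniformMass_pos k))

lemma sum_rowSum_mixedFlow_pos (hM : IsStagedFlow v₁ S0 z Es M) (hη : 0 < η) (hη1 : η < 1)
    (k j : Fin G.edgeFinset.card) : 0 < ∑ x, rowSum (mixedFlow Es M k η j) x := by
  obtain ⟨e, he⟩ := nonempty_of_mem_seqE hM.mem_seqE j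
  exact (hM.isIrreducibleCirculation_mixedFlow hη hη1 k j).sum_rowSum_pos
    ⟨(⟨e, hM.mem_seqE.1 j he⟩, true), he⟩

lemma zp_eq_zm_of_mixedFlow_ne_zero (hM : IsStagedFlow v₁ S0 z Es M) {j : Fin G.edgeFinset.card}
    {x y : VSet G} (hxy : mixedFlow Es M k η j x y ≠ 0) : zp G x = zm G y := by
  by_contra hne
  have hzero {N : VSet G → VSet G → ℝ} (hN : IsFlowIn (Es j) N) : N x y = 0 :=
    by_contra fun hN0 => hne (hN.isStepIn x y hN0).2.2
  exact hxy (by simp [mixedFlow, hzero (hM.isFlowIn j), hzero (isFlowIn_uniformCirculation _)])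

lemma sum_sum_rowSum_mixedFlow (hM : IsStagedFlow v₁ S0 z Es M) (hk : ∀ j, k < j → M j = 0)
    (η : ℝ) : ∑ j ∈ Finset.Iic k, ∑ x, rowSum (mixedFlow Es M k η j) x = 1 := by
  have hmass := sum_Iic_eq_sum (fun j => ∑ x, rowSum (M j) x) (k := k)
    fun j hj => by simp [hk j hj, rowSum]
  simp only [mixedFlow, rowSum_add, rowSum_smul, Pi.add_apply, Pi.smul_apply, smul_eq_mul,
    Finset.sum_add_distrib, ← Finset.mul_sum, hmass, hM.sum_eq_one]
  rw [div_mul_cancel₀ _ (hM.uniformMass_pos k).ne']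
  ring

lemma steers (hδ : 0 < δ) (hM : IsStagedFlow v₁ S0 z Es M) (hk : ∀ j, k < j → M j = 0) :
    Steers unoriented (pS G δ) (statesOver unoriented {unoriented z})
      (statesOver unoriented (Es k)) 1 hM.marginal.1 (flowCost δ Es M) := by
  have hmarginal : hM.marginal.1 = ∑ j ∈ Finset.Iic k, rowSum (M j) := by
    rw [sum_Iic_eq_sum _ fun j hj => by funext; simp [hk j hj, rowSum]]
    funext x
    rw [marginal, Finset.sum_apply]
  have hcost : flowCost δ Es M = ∑ j ∈ Finset.Iic k, pairEntropy (pS G δ (Es j)) (M j) :=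
    (sum_Iic_eq_sum _ fun j hj => by rw [hk j hj, pairEntropy_zero]).symm
  have hlim {X : Type} [TopologicalSpace X] [AddCommMonoid X] [ContinuousAdd X]
      {f : Fin G.edgeFinset.card → (VSet G → VSet G → ℝ) → X} (hf : ∀ j, Continuous (f j)) :
      Tendsto (fun η => ∑ j ∈ Finset.Iic k, f j (mixedFlow Es M k η j)) (𝓝[>] 0)
        (𝓝 (∑ j ∈ Finset.Iic k, f j (M j))) := by
    refine tendsto_finsetSum _ fun j _ => ?_
    simpa [Function.comp_def, mixedFlow_zero] using
      (((hf j).comp (continuous_mixedFlow j)).tendsto 0).mono_left nhdsWithin_le_nhds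
  rw [hmarginal, hcost]
  refine Steers.of_tendsto (pS_nonneg hδ) ?_ (hlim fun _ => continuous_rowSum)
    (hlim fun j => continuous_pairEntropy (pS G δ (Es j)))
  filter_upwards [Ioo_mem_nhdsGT one_pos] with η ⟨hη, hη1⟩
  have hsteers := steers_sum_Iic (ℓ := unoriented) (K := pS G δ)
    (hM.isIrreducibleCirculation_mixedFlow hη hη1 k) (hM.sum_rowSum_mixedFlow_pos hη hη1 k)
    (pS_nonneg hδ) (fun j x y h => pS_pos hδ _ (hM.zp_eq_zm_of_mixedFlow_ne_zero h.ne'))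
    (fun _ _ hij _ => exists_reaches_of_mem_seqE hδ hM.mem_seqE hij)
    (i := ⟨0, k.pos⟩) rfl k
  rwa [hM.start _ rfl, hM.sum_sum_rowSum_mixedFlow hk] at hsteers

end IsStagedFlow

lemma eventually_Wres_lt_of_sInf_lt (hδ : 0 < δ) (hh : Continuous h) {a : ℝ}
    (ha : sInf ((fun μ => LamZ G v₁ δ S0 z μ + ((h μ : ℝ) : EReal)) '' CC G S0) < a) :
    ∀ᶠ n in atTop, Wres G δ z S0 h n < a := by
  obtain ⟨_, ⟨μ, -, rfl⟩, hlt⟩ := sInf_lt_iff.1 ha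
  have hlam : LamZ G v₁ δ S0 z μ < (a - h μ : ℝ) := by
    rw [EReal.coe_sub]
    exact EReal.lt_sub_iff_add_lt (by simp) (by simp) |>.2 hlt
  obtain ⟨Es, M, hM, rfl, hcost⟩ := exists_isStagedFlow_of_LamZ_lt hδ hlam
  obtain ⟨k, hkS0, hk⟩ := hM.exists_last
  exact eventually_Wres_lt_of_steers hδ hh hkS0 (hM.steers hδ hk) (lt_sub_iff_add_lt.1 hcost)

end StagedFlow

end UpperBound

/-!
### The lower bound
-/

lemma eventually_pow_mul_exp_le (d : ℕ) {a b : ℝ} (hab : a < b) :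
    ∀ᶠ n : ℕ in atTop,
      ((n : ℝ) + 1) ^ d * Real.exp (-(n + 1) * b) ≤ Real.exp (-(n + 1) * a) := by
  have hatTop : Tendsto (fun n : ℕ => (n : ℝ) + 1) atTop atTop :=
    tendsto_atTop_add_const_right _ _ tendsto_natCast_atTop_atTop
  filter_upwards [hatTop.eventually
    ((isLittleO_pow_exp_pos_mul_atTop d (sub_pos.2 hab)).bound one_pos)] with n hn
  rw [one_mul, Real.norm_of_nonneg (by positivity), Real.norm_of_nonneg (Real.exp_pos _).le] at hn
  calc ((n : ℝ) + 1) ^ d * Real.exp (-(n + 1) * b)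
      ≤ Real.exp ((b - a) * (n + 1)) * Real.exp (-(n + 1) * b) := by gcongr
    _ = Real.exp (-(n + 1) * a) := by
      rw [← Real.exp_add]
      ring_nf

lemma eventually_forall_ne_zero {ι X Y Z : Type*} [Finite X] [Finite Y] [Finite Z] {l : Filter ι}
    {T : ι → X → Y → Z → ℝ} {M : X → Y → Z → ℝ} (hT : Tendsto T l (𝓝 M)) :
    ∀ᶠ i in l, ∀ x y z, M x y z ≠ 0 → T i x y z ≠ 0 := by
  simp only [eventually_all]
  exact fun x y z => (((hT.apply_nhds x).apply_nhds y).apply_nhds z).eventually_ne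

section Exploration

variable {V : Type} [Fintype V] {G : SimpleGraph V} [DecidableRel G.Adj] {F : Finset (Sym2 V)}

lemma exists_edgeAdj_notMem (hG : G.Connected) (hF : F ⊂ G.edgeFinset) (hne : F.Nonempty) :
    ∃ e ∈ G.edgeFinset, e ∉ F ∧ ∃ e' ∈ F, edgeAdj e e' := by
  by_contra! hclosed
  have hmem {x y : V} (hx : memVerts F x) (hxy : G.Adj x y) : s(x, y) ∈ F := by
    obtain ⟨e', he', hxe'⟩ := hx
    by_contra hnot
    exact hclosed s(x, y) (by simpa using hxy) hnot e' he' ⟨x, by simp, hxe'⟩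
  obtain ⟨e, he⟩ := hne
  have hall (y : V) : memVerts F y := by
    obtain hreach := hG.preconnected (Quot.out e).1 y
    rw [SimpleGraph.reachable_iff_reflTransGen] at hreach
    induction hreach with
    | refl => exact ⟨e, he, e.out_fst_mem⟩
    | tail _ hadj ih => exact ⟨_, hmem ih hadj, by simp⟩
  refine hF.not_subset fun e he => ?_
  induction e using Sym2.ind with
  | _ x y => exact hmem (hall x) (by simpa using he)

variable [DecidableEq V] {f : ℕ → Finset (Sym2 V)}

variable (G) in
/-- Exploration of `G` edge by edge: `F'` adds to `F` one edge adjacent to it, or `F` and `F'` are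
both the full edge set. -/
def ExplorationStep (F F' : Finset (Sym2 V)) : Prop :=
  (∃ e ∈ G.edgeFinset, e ∉ F ∧ (∃ e' ∈ F, edgeAdj e e') ∧ F' = insert e F) ∨
    F = G.edgeFinset ∧ F' = G.edgeFinset

lemma ExplorationStep.subset {F' : Finset (Sym2 V)} (h : ExplorationStep G F F')
    (hF : F ⊆ G.edgeFinset) : F' ⊆ G.edgeFinset := by
  rcases h with ⟨e, he, -, -, rfl⟩ | ⟨-, rfl⟩
  exacts [Finset.insert_subset he hF, Finset.Subset.rfl]

lemma exists_exploration (hG : G.Connected) (hF : F ⊆ G.edgeFinset) (hne : F.Nonempty) :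
    ∃ f : ℕ → Finset (Sym2 V), f 0 = F ∧ ∀ j, ExplorationStep G (f j) (f (j + 1)) := by
  have hstep (E : {E : Finset (Sym2 V) // E ⊆ G.edgeFinset ∧ E.Nonempty}) :
      ∃ E' : {E : Finset (Sym2 V) // E ⊆ G.edgeFinset ∧ E.Nonempty},
        ExplorationStep G E.1 E'.1 := by
    obtain ⟨E, hE, hEne⟩ := E
    rcases hE.eq_or_ssubset with rfl | hlt
    · exact ⟨⟨_, hE, hEne⟩, .inr ⟨rfl, rfl⟩⟩
    · obtain ⟨e, he, heE, hadj⟩ := exists_edgeAdj_notMem hG hlt hEne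
      exact ⟨⟨insert e E, Finset.insert_subset he hE, Finset.insert_nonempty e E⟩,
        .inl ⟨e, he, heE, hadj, rfl⟩⟩
  choose next hnext using hstep
  refine ⟨fun j => (next^[j] ⟨F, hF, hne⟩).1, rfl, fun j => ?_⟩
  simp only [Function.iterate_succ_apply']
  exact hnext _

lemma exists_exploration_through (hG : G.Connected) {n : ℕ} {H : Fin (n + 1) → Finset (Sym2 V)}
    (hH : ∀ i, H i ⊆ G.edgeFinset) (hne : ∀ i, (H i).Nonempty)
    (hstep : ∀ i : Fin n, H i.succ = H i.castSucc ∨ ExplorationStep G (H i.castSucc) (H i.succ)) :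
    ∃ f : ℕ → Finset (Sym2 V), f 0 = H 0 ∧ (∀ j, ExplorationStep G (f j) (f (j + 1))) ∧
      ∀ i, H i ∈ Set.range f := by
  induction n with
  | zero =>
    obtain ⟨f, hf0, hf⟩ := exists_exploration hG (hH 0) (hne 0)
    exact ⟨f, hf0, hf, fun i => ⟨0, by rw [hf0, Fin.fin_one_eq_zero i]⟩⟩
  | succ n ih =>
    obtain ⟨f, hf0, hf, hrange⟩ := ih (H := fun i => H i.succ) (fun i => hH i.succ)
      (fun i => hne i.succ) fun i => hstep i.succ
    rcases hstep 0 with hstay | hgrow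
    · exact ⟨f, hf0.trans hstay, hf, Fin.cases ⟨0, hf0.trans hstay⟩ hrange⟩
    · refine ⟨fun j => Nat.casesOn j (H 0) f, rfl, ?_, Fin.cases ⟨0, rfl⟩ fun i => ?_⟩
      · rintro (_ | j)
        exacts [hf0.substr (p := ExplorationStep G (H 0)) hgrow, hf j]
      · obtain ⟨j, hj⟩ := hrange i
        exact ⟨j + 1, hj⟩

lemma subset_edgeFinset_of_exploration (hf : ∀ j, ExplorationStep G (f j) (f (j + 1)))
    (hf0 : f 0 ⊆ G.edgeFinset) (j : ℕ) : f j ⊆ G.edgeFinset := by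
  induction j with
  | zero => exact hf0
  | succ j ih => exact (hf j).subset ih

lemma card_of_exploration (hf : ∀ j, ExplorationStep G (f j) (f (j + 1)))
    (hf0 : f 0 ⊆ G.edgeFinset) (hcard0 : (f 0).card = 1) (j : ℕ) :
    (f j).card = min (j + 1) G.edgeFinset.card := by
  induction j with
  | zero =>
    have := Finset.card_le_card hf0
    omega
  | succ j ih =>
    have hle := Finset.card_le_card (subset_edgeFinset_of_exploration hf hf0 (j + 1))
    rcases hf j with ⟨e, -, he, -, heq⟩ | ⟨hj, hj'⟩
    · rw [heq, Finset.card_insert_of_notMem he] at hle ⊢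
      omega
    · rw [hj] at ih
      rw [hj']
      omega

lemma mem_seqE_of_exploration {v₁ : V} {e : Sym2 V} (he : e ∈ G.edgeFinset) (hv : v₁ ∈ e)
    (hf0 : f 0 = {e}) (hf : ∀ j, ExplorationStep G (f j) (f (j + 1))) :
    (fun k : Fin G.edgeFinset.card => f k) ∈ seqE G v₁ := by
  have hsub0 : f 0 ⊆ G.edgeFinset := by simpa [hf0] using he
  have hcard (k : Fin G.edgeFinset.card) : (f k).card = k + 1 := by
    rw [card_of_exploration hf hsub0 (by simp [hf0]), min_eq_left k.2]
  have hgrow (k l : Fin G.edgeFinset.card) (hkl : (k : ℕ) + 1 = l) :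
      ∃ e ∉ f k, (∃ e' ∈ f k, edgeAdj e e') ∧ f l = insert e (f k) := by
    rcases hf k with ⟨e, -, hek, hadj, heq⟩ | ⟨hk, -⟩
    · exact ⟨e, hek, hadj, hkl ▸ heq⟩
    · have := hk ▸ hcard k
      omega
  refine ⟨fun k => subset_edgeFinset_of_exploration hf hsub0 k, hcard, fun k l hkl => ?_,
    fun k hk => ⟨e, by simp [hk, hf0], hv⟩, fun k l hkl e' he' => ?_⟩
  · obtain ⟨e, hek, -, heq⟩ := hgrow k l hkl
    exact (Finset.ssubset_insert hek).trans_eq heq.symm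
  · obtain ⟨e, -, hadj, heq⟩ := hgrow k l hkl
    obtain ⟨hl, hk⟩ := Finset.mem_sdiff.1 he'
    rwa [(Finset.mem_insert.1 (heq.subset hl)).resolve_right hk]

lemma exists_fin_eq_of_exploration (hf : ∀ j, ExplorationStep G (f j) (f (j + 1)))
    (hf0 : f 0 ⊆ G.edgeFinset) (hcard0 : (f 0).card = 1) (j : ℕ) :
    ∃ k : Fin G.edgeFinset.card, f k = f j := by
  have hcard := card_of_exploration hf hf0 hcard0
  rcases lt_or_ge j G.edgeFinset.card with hj | hj
  · exact ⟨⟨j, hj⟩, rfl⟩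
  · have hpos : 0 < G.edgeFinset.card :=
      hcard0.symm.trans_le (Finset.card_le_card hf0)
    have htop (i : ℕ) (hi : G.edgeFinset.card ≤ i + 1) : f i = G.edgeFinset :=
      Finset.eq_of_subset_of_card_le (subset_edgeFinset_of_exploration hf hf0 i)
        (by rw [hcard, min_eq_right hi])
    exact ⟨⟨G.edgeFinset.card - 1, by omega⟩,
      (htop _ (by simp only; omega)).trans (htop j (by omega)).symm⟩

end Exploration

section LowerBound

variable {V : Type} [Fintype V] [LinearOrder V] {G : SimpleGraph V} [DecidableRel G.Adj]

section Path

variable {n : ℕ} {g : Fin (n + 1) → VSet G}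

lemma zp_eq_zm_of_pathWeight_ne_zero {δ : ℝ} (hδ : 0 < δ)
    (hg : pathWeight unoriented (pS G δ) g ≠ 0) (i : Fin n) :
    zp G (g i.castSucc) = zm G (g i.succ) :=
  (pS_ne_zero_iff hδ).1 (Finset.prod_ne_zero_iff.1 hg i (Finset.mem_univ i))

lemma unoriented_mem_visited (i : Fin (n + 1)) : unoriented (g i) ∈ visited unoriented g i :=
  mem_visited.2 ⟨i, le_rfl, rfl⟩

lemma visited_subset_edgeFinset (i : Fin (n + 1)) :
    visited unoriented g i ⊆ G.edgeFinset := fun e he => by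
  obtain ⟨j, -, rfl⟩ := mem_visited.1 he
  exact (g j).1.2

lemma edgeAdj_of_zp_eq_zm {x y : VSet G} (hxy : zp G x = zm G y) :
    edgeAdj (unoriented y) (unoriented x) :=
  ⟨zm G y, zm_mem y, hxy ▸ zp_mem x⟩

lemma visited_mem_scrS (hstep : ∀ i : Fin n, zp G (g i.castSucc) = zm G (g i.succ))
    (i : Fin (n + 1)) : visited unoriented g i ∈ scrS G (zm G (g 0)) := by
  induction i using Fin.induction with
  | zero =>
    rw [visited_zero]
    exact singleton_mem_scrS (g 0).1.2 (zm_mem (g 0))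
  | succ i ih =>
    rw [visited_succ]
    exact insert_mem_scrS ih (g i.succ).1.2 (unoriented_mem_visited i.castSucc)
      (edgeAdj_of_zp_eq_zm (hstep i))

lemma visited_mem_of_empMeas_mem_CC {S0 : Set (Finset (Sym2 V))}
    (hS0 : S0 ⊆ scrS G (zm G (g 0))) (hdec : DecreasingIn G (zm G (g 0)) S0)
    (hstep : ∀ i : Fin n, zp G (g i.castSucc) = zm G (g i.succ))
    (hg : empMeas n g ∈ CC G S0) (i : Fin (n + 1)) : visited unoriented g i ∈ S0 := by
  obtain ⟨F, hF, hsub⟩ := empMeas_mem_CC_iff.1 hg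
  refine hdec _ F (visited_mem_scrS hstep i) (hS0 hF) (fun e he => hsub ?_) hF
  obtain ⟨j, -, hj⟩ := mem_visited.1 he
  exact mem_visited.2 ⟨j, Fin.le_last j, hj⟩

lemma visited_succ_eq_or_explorationStep
    (hstep : ∀ i : Fin n, zp G (g i.castSucc) = zm G (g i.succ)) (i : Fin n) :
    visited unoriented g i.succ = visited unoriented g i.castSucc ∨
      ExplorationStep G (visited unoriented g i.castSucc) (visited unoriented g i.succ) := by
  rw [visited_succ]
  by_cases hmem : unoriented (g i.succ) ∈ visited unoriented g i.castSucc
  · exact .inl (Finset.insert_eq_of_mem hmem)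
  · exact .inr (.inl ⟨_, (g i.succ).1.2, hmem,
      ⟨_, unoriented_mem_visited i.castSucc, edgeAdj_of_zp_eq_zm (hstep i)⟩, rfl⟩)

lemma exists_mem_seqE_visited (hG : G.Connected)
    (hstep : ∀ i : Fin n, zp G (g i.castSucc) = zm G (g i.succ)) :
    ∃ Es ∈ seqE G (zm G (g 0)),
      (∀ k : Fin G.edgeFinset.card, (k : ℕ) = 0 → Es k = {unoriented (g 0)}) ∧
      ∀ i, visited unoriented g i ∈ Set.range Es := by
  obtain ⟨f, hf0, hf, hrange⟩ := exists_exploration_through hG (visited_subset_edgeFinset (g := g))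
    (fun i => ⟨_, unoriented_mem_visited i⟩) (visited_succ_eq_or_explorationStep hstep)
  have hf0' : f 0 = {unoriented (g 0)} := hf0.trans (visited_zero g)
  refine ⟨fun k => f k, mem_seqE_of_exploration (g 0).1.2 (zm_mem (g 0)) hf0' hf,
    fun k hk => by simp [hk, hf0'], fun i => ?_⟩
  obtain ⟨j, hj⟩ := hrange i
  obtain ⟨k, hk⟩ := exists_fin_eq_of_exploration hf (hf0 ▸ visited_subset_edgeFinset 0)
    (by simp [hf0']) j
  exact ⟨k, hk.trans hj⟩

end Path

section Limit

variable {v₁ : V} {S0 : Set (Finset (Sym2 V))} {z : VSet G}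
  {Es : Fin G.edgeFinset.card → Finset (Sym2 V)} {M : Finset (Sym2 V) → VSet G → VSet G → ℝ}

lemma sum_comp_of_mem_seqE (hEs : Es ∈ seqE G v₁) {X : Type*} [AddCommMonoid X]
    {φ : Finset (Sym2 V) → X} (hφ : ∀ F ∉ Set.range Es, φ F = 0) :
    ∑ k, φ (Es k) = ∑ F, φ F := by
  refine Fintype.sum_of_injective Es (fun k l hkl => Fin.ext ?_) _ _ hφ fun _ => rfl
  have := (hEs.2.1 k).symm.trans ((congrArg Finset.card hkl).trans (hEs.2.1 l))
  omega

lemma isStagedFlow_of_isCirculationFamily (hM : IsCirculationFamily M) (hEs : Es ∈ seqE G v₁)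
    (hstart : ∀ k : Fin G.edgeFinset.card, (k : ℕ) = 0 → Es k = {z.1.1})
    (hrange : ∀ F ∉ Set.range Es, M F = 0)
    (hsupp : ∀ F x y, M F x y ≠ 0 → F ∈ S0 ∧ unoriented x ∈ F ∧ zp G x = zm G y) :
    IsStagedFlow v₁ S0 z Es fun k => M (Es k) where
  mem_seqE := hEs
  start := hstart
  isFlowIn k := by
    refine ⟨hM.nonneg _, fun x y hxy => ⟨(hsupp _ x y hxy).2.1, ?_, (hsupp _ x y hxy).2.2⟩,
      hM.balanced _⟩
    have hcol : 0 < ∑ u, M (Es k) u y := Finset.sum_pos' (fun u _ => hM.nonneg _ u y)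
      ⟨x, Finset.mem_univ x, (hM.nonneg _ x y).lt_of_ne' hxy⟩
    rw [← hM.balanced] at hcol
    obtain ⟨w, -, hw⟩ := Finset.exists_ne_zero_of_sum_ne_zero hcol.ne'
    exact (hsupp _ y w hw).2.1
  eq_zero k hk := funext₂ fun x y => by_contra fun hxy => hk (hsupp _ x y hxy).1
  sum_eq_one := by
    rw [sum_comp_of_mem_seqE hEs (φ := fun F => ∑ x, rowSum (M F) x) fun F hF => by
      simp [hrange F hF, rowSum], hM.sum_eq_one]

variable {δ : ℝ} {u : ℕ → ℕ} {g : ∀ i, Fin (u i + 1) → VSet G}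

lemma exists_isStagedFlow_of_tendsto (hG : G.Connected) (hδ : 0 < δ) (hS0 : S0 ⊆ scrS G v₁)
    (hdec : DecreasingIn G v₁ S0) (hz : zm G z = v₁) (hu : Tendsto u atTop atTop)
    (hg : ∀ i, g i ∈ restrictedPaths G z S0 (u i))
    (hweight : ∀ i, pathWeight unoriented (pS G δ) (g i) ≠ 0)
    (hM : Tendsto (fun i => transitionMeasure unoriented (g i)) atTop (𝓝 M)) :
    ∃ Es : Fin G.edgeFinset.card → Finset (Sym2 V),
      IsStagedFlow v₁ S0 z Es (fun k => M (Es k)) ∧ ∀ F ∉ Set.range Es, M F = 0 := by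
  obtain ⟨i, hi⟩ := (eventually_forall_ne_zero hM).exists
  obtain ⟨-, hstart, hCC⟩ := Finset.mem_filter.1 (hg i)
  have hstep := zp_eq_zm_of_pathWeight_ne_zero hδ (hweight i)
  obtain rfl : zm G (g i 0) = v₁ := by rw [hstart, hz]
  obtain ⟨Es, hEs, hEs0, hrange⟩ := exists_mem_seqE_visited hG hstep
  have htransition (F : Finset (Sym2 V)) (x y : VSet G) (hne : M F x y ≠ 0) :
      F ∈ Set.range Es ∧ F ∈ S0 ∧ unoriented x ∈ F ∧ zp G x = zm G y := by
    obtain ⟨j, hj⟩ := exists_transition_eq (hi F x y hne)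
    obtain ⟨rfl, rfl, rfl⟩ : _ ∧ _ ∧ _ := by simpa [transition] using hj
    exact ⟨hrange _, visited_mem_of_empMeas_mem_CC hS0 hdec hstep hCC _,
      unoriented_mem_visited _, hstep j⟩
  have hzero (F : Finset (Sym2 V)) (hF : F ∉ Set.range Es) : M F = 0 :=
    funext₂ fun x y => by_contra fun hne => hF (htransition F x y hne).1
  exact ⟨Es, isStagedFlow_of_isCirculationFamily (isCirculationFamily_of_tendsto hu hM) hEs
    (hstart ▸ hEs0) hzero fun F x y hne => (htransition F x y hne).2, hzero⟩

variable {h : ProbMeas (VSet G) → ℝ} {a : ℝ}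

lemma sInf_le_of_tendsto_transitionMeasure (hG : G.Connected) (hδ : 0 < δ) (hS0 : S0 ⊆ scrS G v₁)
    (hdec : DecreasingIn G v₁ S0) (hz : zm G z = v₁) (hh : Continuous h)
    (hu : Tendsto u atTop atTop) (hg : ∀ i, g i ∈ restrictedPaths G z S0 (u i))
    (hweight : ∀ i, pathWeight unoriented (pS G δ) (g i) ≠ 0)
    (hM : Tendsto (fun i => transitionMeasure unoriented (g i)) atTop (𝓝 M))
    (ha : ∀ i, ∑ F, pairEntropy (pS G δ F) (transitionMeasure unoriented (g i) F) +
      h (empMeas (u i) (g i)) ≤ a) :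
    sInf ((fun μ => LamZ G v₁ δ S0 z μ + ((h μ : ℝ) : EReal)) '' CC G S0) ≤ a := by
  obtain ⟨Es, hflow, hzero⟩ := exists_isStagedFlow_of_tendsto hG hδ hS0 hdec hz hu hg hweight hM
  have hempMeas : Tendsto (fun i => empMeas (u i) (g i)) atTop (𝓝 hflow.marginal) := by
    refine tendsto_subtype_rng.2 (tendsto_pi_nhds.2 fun x => ?_)
    have hmarginal : hflow.marginal.1 x = ∑ F, rowSum (M F) x :=
      sum_comp_of_mem_seqE hflow.mem_seqE (φ := fun F => rowSum (M F) x) fun F hF => by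
        simp [hzero F hF, rowSum]
    simpa [hmarginal, coe_empMeas, div_eq_inv_mul] using tendsto_visitCount_div hu hM x
  have hcost : flowCost δ Es (fun k => M (Es k)) = ∑ F, pairEntropy (pS G δ F) (M F) :=
    sum_comp_of_mem_seqE hflow.mem_seqE (φ := fun F => pairEntropy (pS G δ F) (M F)) fun F hF => by
      rw [hzero F hF, pairEntropy_zero]
  have hlim : Tendsto (fun i => ∑ F, pairEntropy (pS G δ F) (transitionMeasure unoriented (g i) F) +
      h (empMeas (u i) (g i))) atTop
      (𝓝 (flowCost δ Es (fun k => M (Es k)) + h hflow.marginal)) := by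
    rw [hcost]
    exact (tendsto_finsetSum _ fun F _ =>
      ((continuous_pairEntropy (pS G δ F)).tendsto (M F)).comp (hM.apply_nhds F)).add
        ((hh.tendsto _).comp hempMeas)
  calc sInf ((fun μ => LamZ G v₁ δ S0 z μ + ((h μ : ℝ) : EReal)) '' CC G S0)
      ≤ LamZ G v₁ δ S0 z hflow.marginal + (h hflow.marginal : ℝ) :=
        sInf_le (Set.mem_image_of_mem _ hflow.marginal_mem_CC)
    _ ≤ (flowCost δ Es (fun k => M (Es k)) : ℝ) + (h hflow.marginal : ℝ) := by
        gcongr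
        exact hflow.LamZ_marginal_le hδ
    _ ≤ a := by
        rw [← EReal.coe_add, EReal.coe_le_coe_iff]
        exact le_of_tendsto' hlim ha

end Limit

variable {v₁ : V} {S0 : Set (Finset (Sym2 V))} {z : VSet G} {δ : ℝ} {h : ProbMeas (VSet G) → ℝ}
  {a b : ℝ}

lemma eventually_le_sum_pairEntropy_add (hG : G.Connected) (hδ : 0 < δ) (hS0 : S0 ⊆ scrS G v₁)
    (hdec : DecreasingIn G v₁ S0) (hz : zm G z = v₁) (hh : Continuous h)
    (ha : a < sInf ((fun μ => LamZ G v₁ δ S0 z μ + ((h μ : ℝ) : EReal)) '' CC G S0)) :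
    ∀ᶠ n in atTop, ∀ g ∈ restrictedPaths G z S0 n, pathWeight unoriented (pS G δ) g ≠ 0 →
      a ≤ ∑ F, pairEntropy (pS G δ F) (transitionMeasure unoriented g F) + h (empMeas n g) := by
  by_contra hfreq
  obtain ⟨u, hu, hbad⟩ := extraction_of_frequently_atTop (not_eventually.1 hfreq)
  push Not at hbad
  choose g hg hweight hlt using hbad
  obtain ⟨M, -, s, hs, hM⟩ := isCompact_Icc.tendsto_subseq fun i =>
    (⟨fun F x y => transitionMeasure_nonneg (g i) F x y,
      fun F x y => transitionMeasure_le_one (g i) F x y⟩ :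
      transitionMeasure unoriented (g i) ∈ Set.Icc 0 1)
  exact ha.not_ge (sInf_le_of_tendsto_transitionMeasure hG hδ hS0 hdec hz hh
    (hu.comp hs).tendsto_atTop (fun i => hg (s i)) (fun i => hweight (s i)) hM
    fun i => (hlt (s i)).le)

lemma eventually_le_Wres_of_lt_sInf (hG : G.Connected) (hδ : 0 < δ) (hS0 : S0 ⊆ scrS G v₁)
    (hdec : DecreasingIn G v₁ S0) (hz : zm G z = v₁) (hh : Continuous h) (hab : a < b)
    (hb : b < sInf ((fun μ => LamZ G v₁ δ S0 z μ + ((h μ : ℝ) : EReal)) '' CC G S0)) :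
    ∀ᶠ n in atTop, a ≤ Wres G δ z S0 h n := by
  filter_upwards [eventually_le_sum_pairEntropy_add hG hδ hS0 hdec hz hh hb,
    eventually_pow_mul_exp_le (Fintype.card (Finset (Sym2 V) × VSet G × VSet G)) hab] with n hn hpow
  refine not_lt.1 fun hlt => ((Wres_lt_iff hδ).1 hlt).not_ge (le_trans ?_ hpow)
  exact sum_exp_mul_pathWeight_le (pS_nonneg hδ) (fun g hg => (Finset.mem_filter.1 hg).2.1) hn

end LowerBound

/-- Generalized Laplace principle for the restricted logarithmic
Laplace functionals `W^n_{𝒮₀}(z)`. -/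
theorem orrw_laplace_principle {V : Type} [Fintype V] [LinearOrder V]
    (G : SimpleGraph V) [DecidableRel G.Adj] (hG : G.Connected)
    (hV : 3 ≤ Fintype.card V) (v₁ : V) (δ : ℝ) (hδ : 0 < δ)
    (S0 : Set (Finset (Sym2 V))) (hS0ne : S0.Nonempty) (hS0sub : S0 ⊆ scrS G v₁)
    (hS0dec : DecreasingIn G v₁ S0)
    (z : VSet G) (hz : zm G z = v₁)
    (h : ProbMeas (VSet G) → ℝ) (hcont : Continuous h) (hbdd : ∃ M : ℝ, ∀ μ, |h μ| ≤ M) :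
    Tendsto (fun n : ℕ => Wres G δ z S0 h n) atTop
      (nhds (sInf ((fun μ => LamZ G v₁ δ S0 z μ + ((h μ : ℝ) : EReal)) '' CC G S0))) := by
  refine tendsto_order.2 ⟨fun c hc => ?_, fun c hc => ?_⟩
  · obtain ⟨b, hcb, hb⟩ := EReal.lt_iff_exists_real_btwn.1 hc
    obtain ⟨a, hca, hab⟩ := EReal.lt_iff_exists_real_btwn.1 hcb
    filter_upwards [eventually_le_Wres_of_lt_sInf hG hδ hS0sub hS0dec hz hcont
      (EReal.coe_lt_coe_iff.1 hab) hb] with n hn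
    exact hca.trans_le hn
  · obtain ⟨a, ha, hac⟩ := EReal.lt_iff_exists_real_btwn.1 hc
    filter_upwards [eventually_Wres_lt_of_sInf_lt hδ hcont ha] with n hn
    exact hn.trans hac

end ORRW
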